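/- arXiv:math/0512215 — 6 statements merged into one kernel-verified Lean document; each statement's English description precedes it below -/
import Mathlib

section
/- Let A be an associative unital algebra over a field K of characteristic zero and let δ be a K-derivation of A such that δ(x) = 1 for some x ∈ A. Let A^δ := ker δ (a subalgebra of A). Then: (i) the inner derivation ad(x) : a ↦ xa − ax maps A^δ into itself; (ii) for every n ≥ 0, ker(δ^{n+1}) = A^δ ⊕ A^δ·x ⊕ ⋯ ⊕ A^δ·x^n = A^δ ⊕ x·A^δ ⊕ ⋯ ⊕ x^n·A^δ (internal direct sums of K-subspaces); (iii) consequently N(δ,A) := {a ∈ A : δ^k(a) = 0 for some k ≥ 0} equals the internal direct sum ⊕_{i≥0} A^δ·x^i, i.e. N(δ,A) is a free left A^δ-module with basis {x^i : i ≥ 0} (and likewise a free right A^δ-module). -/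
/-- A `K`-derivation of a (possibly noncommutative) `K`-algebra `A`:
a `K`-linear map satisfying the Leibniz rule. -/
def IsDerivation {K A : Type*} [CommRing K] [Ring A] [Algebra K A]
    (δ : A →ₗ[K] A) : Prop :=
  ∀ a b : A, δ (a * b) = δ a * b + a * δ b

/-!
On `x`, `δ` acts as `d/dx`, and it is linear over `ker δ` on both sides, so
`δⁿ (c xⁿ) = n! c = δⁿ (xⁿ c)` for `c ∈ ker δ`. Since `n!` is invertible, `δⁿ` maps each of
`(ker δ) xⁿ` and `xⁿ (ker δ)` bijectively onto `ker δ`. For any endomorphism `T`, a submodule which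
`Tⁿ` maps bijectively onto `ker T` is a complement of `ker Tⁿ` in `ker Tⁿ⁺¹`; adding up these
complements gives the kernels, and modularity of the submodule lattice makes the sum direct.
-/

section Lattice

variable {α : Type*} [CompleteLattice α]

theorem eq_biSup_range_of_succ_eq_sup {F S : ℕ → α} (zero : F 0 = ⊥)
    (succ : ∀ n, F (n + 1) = F n ⊔ S n) (n : ℕ) : F n = ⨆ i ∈ Finset.range n, S i := by
  induction n with
  | zero => simp [zero]
  | succ n ih => rw [succ, ih, Finset.range_add_one, Finset.iSup_insert, sup_comm]

theorem iSupIndep_of_disjoint_biSup_range [IsModularLattice α] [IsCompactlyGenerated α]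
    {S : ℕ → α} (h : ∀ n, Disjoint (S n) (⨆ i ∈ Finset.range n, S i)) : iSupIndep S := by
  have supIndep_range (n : ℕ) : (Finset.range n).SupIndep S := by
    induction n with
    | zero => exact Finset.supIndep_empty S
    | succ n ih =>
      rw [Finset.range_add_one]
      exact ih.insert (by simpa only [Finset.sup_eq_iSup] using h n)
  exact iSupIndep_iff_supIndep.mpr fun s ↦
    (supIndep_range (s.sup id + 1)).subset s.subset_range_sup_succ

end Lattice

section KernelFiltration

open LinearMap

variable {R M : Type*} [Ring R] [AddCommGroup M] [Module R M] {T : Module.End R M}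

theorem setOf_exists_pow_apply_eq_zero_eq_iSup_ker_pow (T : Module.End R M) :
    {a : M | ∃ k : ℕ, (T ^ k) a = 0} = (⨆ k : ℕ, ker (T ^ k) : Submodule R M) := by
  ext a
  exact (Submodule.mem_iSup_of_directed _ T.iterateKer.monotone.directed_le).symm

theorem bijOn_nsmul_ker [Module ℚ M] (T : Module.End R M) {n : ℕ} (hn : n ≠ 0) :
    Set.BijOn (fun a : M ↦ n • a) (ker T) (ker T) := by
  have : IsAddTorsionFree M := .of_module_rat M
  refine ⟨fun a ha ↦ nsmul_mem ha n, (nsmul_right_injective hn).injOn, fun a ha ↦ ?_⟩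
  refine ⟨(n : ℚ)⁻¹ • a, ?_, ?_⟩
  · rw [SetLike.mem_coe, mem_ker, map_rat_smul, mem_ker.mp ha, smul_zero]
  · simp only [← Nat.cast_smul_eq_nsmul ℚ, smul_inv_smul₀ (Nat.cast_ne_zero.mpr hn : (n : ℚ) ≠ 0)]

/-- The submodules `S n` form a kernel ladder for `T` if `T ^ n` maps `S n` bijectively onto
`ker T`. This encodes `ker (T ^ (n + 1)) = ker (T ^ n) ⊕ S n` together with the surjectivity of
`T ^ n : ker (T ^ (n + 1)) → ker T`. -/
def IsKernelLadder (T : Module.End R M) (S : ℕ → Submodule R M) : Prop :=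
  ∀ n, Set.BijOn ⇑(T ^ n) (S n) (ker T)

namespace IsKernelLadder

variable {S : ℕ → Submodule R M}

theorem of_bijOn {f : ℕ → Module.End R M}
    (h : ∀ n, Set.BijOn (fun a ↦ (T ^ n) (f n a)) (ker T) (ker T)) :
    IsKernelLadder T fun n ↦ (ker T).map (f n) := by
  refine fun n ↦ ⟨Set.mapsTo_image_iff.mpr (h n).mapsTo, (h n).injOn.image_of_comp, fun a ha ↦ ?_⟩
  obtain ⟨c, hc, hca⟩ := (h n).surjOn ha
  exact ⟨f n c, Submodule.mem_map_of_mem hc, hca⟩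

theorem disjoint_ker_pow (h : IsKernelLadder T S) (n : ℕ) : Disjoint (S n) (ker (T ^ n)) :=
  disjoint_ker_iff_injOn.mpr (h n).injOn

theorem ker_pow_succ_eq_sup (h : IsKernelLadder T S) (n : ℕ) :
    ker (T ^ (n + 1)) = ker (T ^ n) ⊔ S n := by
  have map_eq : (S n).map (T ^ n) = ker T := SetLike.coe_injective (h n).image_eq
  rw [pow_succ', Module.End.mul_eq_comp, ker_comp, ← map_eq, Submodule.comap_map_eq, sup_comm]

theorem ker_pow_eq_biSup (h : IsKernelLadder T S) (n : ℕ) :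
    ker (T ^ n) = ⨆ i ∈ Finset.range n, S i :=
  eq_biSup_range_of_succ_eq_sup (F := fun n ↦ ker (T ^ n)) (by simp [Module.End.one_eq_id])
    h.ker_pow_succ_eq_sup n

protected theorem iSupIndep (h : IsKernelLadder T S) : iSupIndep S :=
  iSupIndep_of_disjoint_biSup_range fun n ↦ h.ker_pow_eq_biSup n ▸ h.disjoint_ker_pow n

theorem setOf_exists_pow_apply_eq_zero_eq_iSup (h : IsKernelLadder T S) :
    {a : M | ∃ k : ℕ, (T ^ k) a = 0} = (⨆ n, S n : Submodule R M) := by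
  rw [setOf_exists_pow_apply_eq_zero_eq_iSup_ker_pow]
  refine congrArg _ (le_antisymm (iSup_le fun n ↦ ?_) (iSup_mono' fun n ↦ ⟨n + 1, ?_⟩))
  · exact h.ker_pow_eq_biSup n ▸ iSup₂_le fun i _ ↦ le_iSup S i
  · exact h.ker_pow_succ_eq_sup n ▸ le_sup_right

end IsKernelLadder

end KernelFiltration

namespace IsDerivation

open LinearMap

variable {K A : Type*} [CommRing K] [Ring A] [Algebra K A] {δ : A →ₗ[K] A} {x c : A}

theorem commutator_mem_ker {a : A} (hδ : IsDerivation δ) (hx : Commute (δ x) a)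
    (ha : a ∈ ker δ) : x * a - a * x ∈ ker δ := by
  rw [mem_ker] at ha ⊢
  rw [map_sub, hδ, hδ, ha, hx.eq, mul_zero, zero_mul, add_zero, zero_add, sub_self]

theorem pow_apply_mul_of_mem_ker_left (hδ : IsDerivation δ) (hc : c ∈ ker δ) (n : ℕ) (a : A) :
    (δ ^ n) (c * a) = c * (δ ^ n) a := by
  induction n with
  | zero => rfl
  | succ n ih =>
    simp only [pow_succ', Module.End.mul_apply, ih, hδ c, mem_ker.mp hc, zero_mul, zero_add]

theorem pow_apply_mul_of_mem_ker_right (hδ : IsDerivation δ) (hc : c ∈ ker δ) (n : ℕ) (a : A) :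
    (δ ^ n) (a * c) = (δ ^ n) a * c := by
  induction n with
  | zero => rfl
  | succ n ih =>
    simp only [pow_succ', Module.End.mul_apply, ih, hδ _ c, mem_ker.mp hc, mul_zero, add_zero]

theorem map_pow_succ (hδ : IsDerivation δ) (hx : Commute x (δ x)) (n : ℕ) :
    δ (x ^ (n + 1)) = (n + 1) • (x ^ n * δ x) := by
  induction n with
  | zero => simp
  | succ n ih =>
    rw [pow_succ, hδ, ih, smul_mul_assoc, mul_assoc, ← hx.eq, ← mul_assoc, ← pow_succ, ← succ_nsmul]

theorem pow_apply_pow_self (hδ : IsDerivation δ) (hx : δ x = 1) (n : ℕ) :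
    (δ ^ n) (x ^ n) = (n.factorial : A) := by
  induction n with
  | zero => simp
  | succ n ih =>
    rw [pow_succ δ, Module.End.mul_apply, hδ.map_pow_succ (hx ▸ Commute.one_right x), hx, mul_one,
      map_nsmul, ih, Nat.factorial_succ, Nat.cast_mul, nsmul_eq_mul]

variable [Module ℚ A]

theorem bijOn_pow_mulRight (hδ : IsDerivation δ) (hx : δ x = 1) (n : ℕ) :
    Set.BijOn (fun c ↦ (δ ^ n) (mulRight K (x ^ n) c)) (ker δ) (ker δ) := by
  refine (bijOn_nsmul_ker δ n.factorial_ne_zero).congr fun c hc ↦ ?_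
  rw [mulRight_apply, hδ.pow_apply_mul_of_mem_ker_left hc,
    hδ.pow_apply_pow_self hx, ← nsmul_eq_mul']

theorem bijOn_pow_mulLeft (hδ : IsDerivation δ) (hx : δ x = 1) (n : ℕ) :
    Set.BijOn (fun c ↦ (δ ^ n) (mulLeft K (x ^ n) c)) (ker δ) (ker δ) := by
  refine (bijOn_nsmul_ker δ n.factorial_ne_zero).congr fun c hc ↦ ?_
  rw [mulLeft_apply, hδ.pow_apply_mul_of_mem_ker_right hc,
    hδ.pow_apply_pow_self hx, ← nsmul_eq_mul]

end IsDerivation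

theorem ore_structure_of_kernel_powers_general
    {K A : Type*} [CommRing K] [Ring A] [Algebra K A] [Module ℚ A]
    (δ : A →ₗ[K] A) (hδ : IsDerivation δ) (x : A) (hx : δ x = 1) :
    (∀ a ∈ LinearMap.ker δ, x * a - a * x ∈ LinearMap.ker δ) ∧
    (∀ n : ℕ, LinearMap.ker (δ ^ (n + 1)) =
      ⨆ i ∈ Finset.range (n + 1),
        Submodule.map (LinearMap.mulRight K (x ^ i)) (LinearMap.ker δ)) ∧
    (∀ n : ℕ, LinearMap.ker (δ ^ (n + 1)) =
      ⨆ i ∈ Finset.range (n + 1),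
        Submodule.map (LinearMap.mulLeft K (x ^ i)) (LinearMap.ker δ)) ∧
    ({a : A | ∃ k : ℕ, (δ ^ k) a = 0} =
      (⨆ i : ℕ, Submodule.map (LinearMap.mulRight K (x ^ i)) (LinearMap.ker δ) : Submodule K A)) ∧
    ({a : A | ∃ k : ℕ, (δ ^ k) a = 0} =
      (⨆ i : ℕ, Submodule.map (LinearMap.mulLeft K (x ^ i)) (LinearMap.ker δ) : Submodule K A)) ∧
    iSupIndep (fun i : ℕ => Submodule.map (LinearMap.mulRight K (x ^ i)) (LinearMap.ker δ)) ∧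
    iSupIndep (fun i : ℕ => Submodule.map (LinearMap.mulLeft K (x ^ i)) (LinearMap.ker δ)) ∧
    (∀ i : ℕ, ∀ c ∈ LinearMap.ker δ, c * x ^ i = 0 → c = 0) ∧
    (∀ i : ℕ, ∀ c ∈ LinearMap.ker δ, x ^ i * c = 0 → c = 0) := by
  have bijR := hδ.bijOn_pow_mulRight hx
  have bijL := hδ.bijOn_pow_mulLeft hx
  have ladderR := IsKernelLadder.of_bijOn bijR
  have ladderL := IsKernelLadder.of_bijOn bijL
  have commute_one (a : A) : Commute (δ x) a := hx ▸ Commute.one_left a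
  exact ⟨fun a ha ↦ hδ.commutator_mem_ker (commute_one a) ha,
    fun n ↦ ladderR.ker_pow_eq_biSup (n + 1), fun n ↦ ladderL.ker_pow_eq_biSup (n + 1),
    ladderR.setOf_exists_pow_apply_eq_zero_eq_iSup,
    ladderL.setOf_exists_pow_apply_eq_zero_eq_iSup,
    ladderR.iSupIndep, ladderL.iSupIndep,
    fun i c hc h ↦ (bijR i).injOn hc (zero_mem _) (by simp [h]),
    fun i c hc h ↦ (bijL i).injOn hc (zero_mem _) (by simp [h])⟩

/-- **Lemma (Ore-extension structure of `N(δ,A)`).**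
If `δ` is a `K`-derivation of `A` (char `K = 0`) with `δ x = 1`, then
(i) the inner derivation `ad x` preserves `A^δ = ker δ`;
(ii) for every `n`, `ker (δ^{n+1}) = A^δ ⊕ A^δ x ⊕ ⋯ ⊕ A^δ xⁿ = A^δ ⊕ x A^δ ⊕ ⋯ ⊕ xⁿ A^δ`;
(iii) `N(δ,A) = ⊕_{i ≥ 0} A^δ xⁱ = ⊕_{i ≥ 0} xⁱ A^δ`, a free left (and right) `A^δ`-module
with basis `{xⁱ}`. -/
theorem ore_structure_of_kernel_powers
    {K A : Type*} [Field K] [CharZero K] [Ring A] [Algebra K A]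
    (δ : A →ₗ[K] A) (hδ : IsDerivation δ) (x : A) (hx : δ x = 1) :
    -- (i) `ad x` maps `A^δ` into itself
    (∀ a ∈ LinearMap.ker δ, x * a - a * x ∈ LinearMap.ker δ) ∧
    -- (ii) kernels of powers of `δ`: right-multiplication version
    (∀ n : ℕ, LinearMap.ker (δ ^ (n + 1)) =
      ⨆ i ∈ Finset.range (n + 1),
        Submodule.map (LinearMap.mulRight K (x ^ i)) (LinearMap.ker δ)) ∧
    -- (ii) kernels of powers of `δ`: left-multiplication version
    (∀ n : ℕ, LinearMap.ker (δ ^ (n + 1)) =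
      ⨆ i ∈ Finset.range (n + 1),
        Submodule.map (LinearMap.mulLeft K (x ^ i)) (LinearMap.ker δ)) ∧
    -- (iii) `N(δ,A)` is the internal direct sum `⊕_{i ≥ 0} A^δ xⁱ = ⊕_{i ≥ 0} xⁱ A^δ`
    ({a : A | ∃ k : ℕ, (δ ^ k) a = 0} =
      (⨆ i : ℕ, Submodule.map (LinearMap.mulRight K (x ^ i)) (LinearMap.ker δ) : Submodule K A)) ∧
    ({a : A | ∃ k : ℕ, (δ ^ k) a = 0} =
      (⨆ i : ℕ, Submodule.map (LinearMap.mulLeft K (x ^ i)) (LinearMap.ker δ) : Submodule K A)) ∧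
    -- directness of the sums (the `{xⁱ}` are a basis over `A^δ`)
    iSupIndep (fun i : ℕ => Submodule.map (LinearMap.mulRight K (x ^ i)) (LinearMap.ker δ)) ∧
    iSupIndep (fun i : ℕ => Submodule.map (LinearMap.mulLeft K (x ^ i)) (LinearMap.ker δ)) ∧
    -- freeness: `c ↦ c xⁱ` and `c ↦ xⁱ c` are injective on `A^δ`
    (∀ i : ℕ, ∀ c ∈ LinearMap.ker δ, c * x ^ i = 0 → c = 0) ∧
    (∀ i : ℕ, ∀ c ∈ LinearMap.ker δ, x ^ i * c = 0 → c = 0) := by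
  let : Module ℚ A := Module.compHom A (algebraMap ℚ K)
  exact ore_structure_of_kernel_powers_general δ hδ x hx
end

section
/- Let A be an associative unital algebra over a field K of characteristic zero, let δ be a locally nilpotent K-derivation of A, and let x ∈ A satisfy δ(x) = 1. Define the K-linear map φ : A → A by φ(a) := Σ_{i≥0} (−1)^i (x^i/i!)·δ^i(a) (a finite sum for each a, by local nilpotency). Then: (1) φ(a·c) = φ(a)·c for all a ∈ A and c ∈ A^δ := ker δ (φ is a homomorphism of right A^δ-modules); (2) A = A^δ ⊕ xA as K-vector spaces and φ is the projection onto A^δ along xA; in particular the image of φ is A^δ and φ(y) = y for all y ∈ A^δ; (3) φ(x^i) = 0 for all i ≥ 1; (4) if x lies in the centre of A then φ is a K-algebra homomorphism. -/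
section Weyl

variable {R : Type*} [Semiring R] {D X : R}

theorem mul_pow_succ_of_mul_eq_mul_add_one (h : D * X = X * D + 1) (n : ℕ) :
    D * X ^ (n + 1) = X ^ (n + 1) * D + (n + 1) • X ^ n := by
  induction n with
  | zero => simpa using h
  | succ n ih =>
    rw [pow_succ X (n + 1), ← mul_assoc, ih, add_mul, mul_assoc, h, smul_mul_assoc, ← pow_succ,
      mul_add, mul_one, ← mul_assoc, add_assoc, succ_nsmul' _ (n + 1)]

theorem pow_succ_mul_of_mul_eq_mul_add_one (h : D * X = X * D + 1) (n : ℕ) :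
    D ^ (n + 1) * X = X * D ^ (n + 1) + (n + 1) • D ^ n := by
  -- In the opposite ring, `X` and `D` satisfy the same relation with their roles exchanged.
  have h_op : MulOpposite.op X * MulOpposite.op D = MulOpposite.op D * MulOpposite.op X + 1 :=
    congrArg MulOpposite.op h
  exact congrArg MulOpposite.unop (mul_pow_succ_of_mul_eq_mul_add_one h_op n)

end Weyl

section DixmierSum

variable (K : Type*) [Field K]

/-- The coefficient `(-1)ⁱ / i!` of `Xⁱ Dⁱ` in the Dixmier map. -/
def dixmierCoeff (i : ℕ) : K := (-1 : K) ^ i * ((i.factorial : K)⁻¹)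

theorem dixmierCoeff_zero : dixmierCoeff K 0 = 1 := by
  simp [dixmierCoeff]

theorem succ_nsmul_dixmierCoeff_succ [CharZero K] (i : ℕ) :
    (i + 1) • dixmierCoeff K (i + 1) = -dixmierCoeff K i := by
  have h_succ : (i : K) + 1 ≠ 0 := i.cast_add_one_ne_zero
  simp only [dixmierCoeff, nsmul_eq_mul, Nat.factorial_succ, Nat.cast_mul, Nat.cast_succ, pow_succ]
  field_simp

theorem dixmierCoeff_succ_smul_succ_nsmul [CharZero K] {M : Type*} [AddCommGroup M] [Module K M]
    (i : ℕ) (m : M) : dixmierCoeff K (i + 1) • (i + 1) • m = -(dixmierCoeff K i • m) := by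
  rw [smul_comm, ← smul_assoc, succ_nsmul_dixmierCoeff_succ, neg_smul]

variable {R : Type*} [Ring R] [Algebra K R] {D X : R}

/-- The partial sum `∑_{i < n} (-1)ⁱ / i! Xⁱ Dⁱ` of the normally ordered exponential of `-X D`. -/
def dixmierSum (D X : R) (n : ℕ) : R :=
  ∑ i ∈ Finset.range n, dixmierCoeff K i • (X ^ i * D ^ i)

theorem dixmierSum_succ (D X : R) (n : ℕ) :
    dixmierSum K D X (n + 1) = dixmierSum K D X n + dixmierCoeff K n • (X ^ n * D ^ n) :=
  Finset.sum_range_succ _ n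

theorem dixmierSum_one (D X : R) : dixmierSum K D X 1 = 1 := by
  simp [dixmierSum, dixmierCoeff_zero]

theorem mul_dixmierSum_succ [CharZero K] (h : D * X = X * D + 1) (n : ℕ) :
    D * dixmierSum K D X (n + 1) = dixmierCoeff K n • (X ^ n * D ^ (n + 1)) := by
  induction n with
  | zero => simp [dixmierSum_one, dixmierCoeff_zero]
  | succ n ih =>
    rw [dixmierSum_succ, mul_add, ih, mul_smul_comm, ← mul_assoc,
      mul_pow_succ_of_mul_eq_mul_add_one h, add_mul, smul_mul_assoc, smul_add,
      dixmierCoeff_succ_smul_succ_nsmul, mul_assoc, ← pow_succ' D]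
    abel

theorem dixmierSum_succ_mul [CharZero K] (h : D * X = X * D + 1) (n : ℕ) :
    dixmierSum K D X (n + 1) * X = dixmierCoeff K n • (X ^ (n + 1) * D ^ n) := by
  induction n with
  | zero => simp [dixmierSum_one, dixmierCoeff_zero]
  | succ n ih =>
    rw [dixmierSum_succ, add_mul, ih, smul_mul_assoc, mul_assoc,
      pow_succ_mul_of_mul_eq_mul_add_one h, mul_add, mul_smul_comm, smul_add,
      dixmierCoeff_succ_smul_succ_nsmul, ← mul_assoc, ← pow_succ X]
    abel

theorem dvd_one_sub_dixmierSum_succ (D X : R) (n : ℕ) : X ∣ 1 - dixmierSum K D X (n + 1) := by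
  induction n with
  | zero => simp [dixmierSum_one]
  | succ n ih =>
    rw [dixmierSum_succ, ← sub_sub]
    exact ih.sub (dvd_smul_of_dvd _ ((dvd_pow_self X n.succ_ne_zero).mul_right _))

end DixmierSum

section DixmierMap

open LinearMap (ker range mem_ker IsProj)

variable {K M : Type*} [Field K] [AddCommGroup M] [Module K M] {D X φ : Module.End K M}

/-- `φ` is the Dixmier map `∑_{i ≥ 0} (-1)ⁱ / i! Xⁱ Dⁱ` at the vectors killed by a power of `D`,
where this series is a finite sum; other vectors are not constrained. -/
def IsDixmierMap (D X φ : Module.End K M) : Prop :=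
  ∀ (m : M) (n : ℕ), (D ^ n) m = 0 → φ m = dixmierSum K D X n m

namespace IsDixmierMap

theorem apply_eq_dixmierSum_succ (hφ : IsDixmierMap D X φ) {m : M} {n : ℕ} (hm : (D ^ n) m = 0) :
    φ m = dixmierSum K D X (n + 1) m :=
  hφ m (n + 1) (Module.End.pow_map_zero_of_le n.le_succ hm)

theorem apply_of_mem_ker (hφ : IsDixmierMap D X φ) {m : M} (hm : m ∈ ker D) : φ m = m := by
  rw [hφ m 1 (by simpa using hm), dixmierSum_one, Module.End.one_apply]

theorem sub_apply_mem_range (hφ : IsDixmierMap D X φ) {m : M} {n : ℕ} (hm : (D ^ n) m = 0) :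
    m - φ m ∈ range X := by
  obtain ⟨Q, hQ⟩ := dvd_one_sub_dixmierSum_succ K D X n
  exact ⟨Q m, by simpa [hφ.apply_eq_dixmierSum_succ hm] using (LinearMap.congr_fun hQ m).symm⟩

variable [CharZero K]

theorem apply_mem_ker (hφ : IsDixmierMap D X φ) (h : D * X = X * D + 1) {m : M} {n : ℕ}
    (hm : (D ^ n) m = 0) : φ m ∈ ker D := by
  have h_pow : (D ^ (n + 1)) m = 0 := Module.End.pow_map_zero_of_le n.le_succ hm
  rw [mem_ker, hφ.apply_eq_dixmierSum_succ hm, ← Module.End.mul_apply, mul_dixmierSum_succ K h,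
    LinearMap.smul_apply, Module.End.mul_apply, h_pow, map_zero, smul_zero]

theorem apply_apply_eq_zero (hφ : IsDixmierMap D X φ) (h : D * X = X * D + 1) {m : M} {n : ℕ}
    (hm : (D ^ n) m = 0) : φ (X m) = 0 := by
  have h_pow : (D ^ (n + 1)) (X m) = 0 := by
    rw [← Module.End.mul_apply, pow_succ_mul_of_mul_eq_mul_add_one h, LinearMap.add_apply,
      LinearMap.smul_apply, Module.End.mul_apply, Module.End.pow_map_zero_of_le n.le_succ hm, hm,
      map_zero, smul_zero, add_zero]
  rw [hφ _ _ h_pow, ← Module.End.mul_apply, dixmierSum_succ_mul K h, LinearMap.smul_apply,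
    Module.End.mul_apply, hm, map_zero, smul_zero]

theorem isProj_ker (hφ : IsDixmierMap D X φ) (h : D * X = X * D + 1)
    (hD : ∀ m, ∃ n : ℕ, (D ^ n) m = 0) : IsProj (ker D) φ where
  map_mem m := (hD m).elim fun _ hm => hφ.apply_mem_ker h hm
  map_id _ hm := hφ.apply_of_mem_ker hm

theorem ker_eq_range (hφ : IsDixmierMap D X φ) (h : D * X = X * D + 1)
    (hD : ∀ m, ∃ n : ℕ, (D ^ n) m = 0) : ker φ = range X := by
  refine le_antisymm (fun m (hm : φ m = 0) => ?_) ?_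
  · obtain ⟨n, hn⟩ := hD m
    simpa only [hm, sub_zero] using hφ.sub_apply_mem_range hn
  · rintro _ ⟨m, rfl⟩
    exact (hD m).elim fun _ hm => hφ.apply_apply_eq_zero h hm

end IsDixmierMap

end DixmierMap

section ProjectionOntoSubalgebra

theorem sub_apply_mem_ker_of_isProj {R M : Type*} [Semiring R] [AddCommGroup M] [Module R M]
    {p : Submodule R M} {φ : M →ₗ[R] M} (hφ : LinearMap.IsProj p φ) (m : M) :
    m - φ m ∈ LinearMap.ker φ := by
  rw [LinearMap.mem_ker, map_sub, hφ.map_id _ (hφ.map_mem m), sub_self]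

variable {K A : Type*} [CommSemiring K] [Ring A] [Algebra K A] {S : Subalgebra K A}
  {φ : A →ₗ[K] A}

theorem map_mul_of_isProj_of_mem (hφ : LinearMap.IsProj S.toSubmodule φ)
    (h_right : ∀ a ∈ LinearMap.ker φ, ∀ b, a * b ∈ LinearMap.ker φ) (a : A) {c : A} (hc : c ∈ S) :
    φ (a * c) = φ a * c := by
  have h_ker : φ ((a - φ a) * c) = 0 := h_right _ (sub_apply_mem_ker_of_isProj hφ a) c
  calc φ (a * c) = φ (φ a * c) + φ ((a - φ a) * c) := by rw [← map_add, ← add_mul, add_sub_cancel]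
    _ = φ a * c := by rw [hφ.map_id _ (S.mul_mem (hφ.map_mem a) hc), h_ker, add_zero]

theorem map_mul_of_isProj (hφ : LinearMap.IsProj S.toSubmodule φ)
    (h_right : ∀ a ∈ LinearMap.ker φ, ∀ b, a * b ∈ LinearMap.ker φ)
    (h_left : ∀ b ∈ LinearMap.ker φ, ∀ a, a * b ∈ LinearMap.ker φ) (a b : A) :
    φ (a * b) = φ a * φ b := by
  have h_ker : φ (a * (b - φ b)) = 0 := h_left _ (sub_apply_mem_ker_of_isProj hφ b) a
  calc φ (a * b) = φ (a * φ b) + φ (a * (b - φ b)) := by rw [← map_add, ← mul_add, add_sub_cancel]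
    _ = φ a * φ b := by rw [map_mul_of_isProj_of_mem hφ h_right a (hφ.map_mem b), h_ker, add_zero]

end ProjectionOntoSubalgebra

section RangeMulLeft

variable {K A : Type*} [Semiring K] [NonUnitalSemiring A] [Module K A] [SMulCommClass K A A] {x : A}

theorem mul_right_mem_range_mulLeft :
    ∀ a ∈ LinearMap.range (LinearMap.mulLeft K x), ∀ b,
      a * b ∈ LinearMap.range (LinearMap.mulLeft K x) := by
  rintro _ ⟨a, rfl⟩ b
  exact ⟨a * b, (mul_assoc x a b).symm⟩

theorem mul_left_mem_range_mulLeft (hx : ∀ a, Commute x a) :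
    ∀ b ∈ LinearMap.range (LinearMap.mulLeft K x), ∀ a,
      a * b ∈ LinearMap.range (LinearMap.mulLeft K x) := by
  rintro _ ⟨b, rfl⟩ a
  exact ⟨a * b, (hx a).left_comm b⟩

end RangeMulLeft

namespace IsDerivation

variable {K A : Type*} [CommRing K] [Ring A] [Algebra K A] {δ : A →ₗ[K] A}

theorem map_one_eq_zero (hδ : IsDerivation δ) : δ 1 = 0 := by
  simpa using hδ 1 1

/-- The subalgebra `A^δ` of constants of the derivation `δ`. -/
def constants (hδ : IsDerivation δ) : Subalgebra K A :=
  (LinearMap.ker δ).toSubalgebra hδ.map_one_eq_zero fun a b (ha : δ a = 0) (hb : δ b = 0) =>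
    show δ (a * b) = 0 by rw [hδ, ha, hb, zero_mul, mul_zero, add_zero]

theorem mul_mulLeft (hδ : IsDerivation δ) {x : A} (hx : δ x = 1) :
    δ * LinearMap.mulLeft K x = LinearMap.mulLeft K x * δ + 1 := by
  ext a
  simp [hδ x a, hx, add_comm]

end IsDerivation

theorem dixmierSum_mulLeft_apply {K A : Type*} [Field K] [Ring A] [Algebra K A]
    (δ : A →ₗ[K] A) (x a : A) (n : ℕ) :
    dixmierSum K δ (LinearMap.mulLeft K x) n a =
      ∑ i ∈ Finset.range n, dixmierCoeff K i • (x ^ i * (δ ^ i) a) := by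
  simp [dixmierSum, LinearMap.sum_apply, LinearMap.pow_mulLeft]

/-- **Theorem.** Let `δ` be a locally nilpotent `K`-derivation (char `K = 0`) with
`δ x = 1`, and let `φ = Σ_{i≥0} (-1)ⁱ (xⁱ/i!) δⁱ` (characterized below by its value on
each `a`, the sum being finite by local nilpotency). Then
(1) `φ` is a homomorphism of right `A^δ`-modules;
(2) `A = A^δ ⊕ xA` and `φ` is the projection onto `A^δ` along `xA`; in particular
    `im φ = A^δ` and `φ y = y` for `y ∈ A^δ`;
(3) `φ (xⁱ) = 0` for `i ≥ 1`;
(4) if `x` is central then `φ` is a `K`-algebra homomorphism. -/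
theorem projection_onto_constants
    {K A : Type*} [Field K] [CharZero K] [Ring A] [Algebra K A]
    (δ : A →ₗ[K] A) (hδ : IsDerivation δ)
    (hln : ∀ a : A, ∃ k : ℕ, (δ ^ k) a = 0)
    (x : A) (hx : δ x = 1)
    (φ : A →ₗ[K] A)
    (hφ : ∀ (a : A) (N : ℕ), (δ ^ N) a = 0 →
      φ a = ∑ i ∈ Finset.range N,
        ((-1 : K) ^ i * ((i.factorial : K)⁻¹)) • (x ^ i * (δ ^ i) a)) :
    -- (1) right `A^δ`-module homomorphism
    (∀ (a c : A), δ c = 0 → φ (a * c) = φ a * c) ∧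
    -- (2) `φ` is the projection of `A = A^δ ⊕ xA` onto `A^δ`:
    (∀ a : A, δ (φ a) = 0 ∧ (∃ b : A, a - φ a = x * b) ∧
      (∀ (y b : A), δ y = 0 → a = y + x * b → y = φ a)) ∧
    (Set.range φ = {a : A | δ a = 0}) ∧
    (∀ y : A, δ y = 0 → φ y = y) ∧
    -- (3)
    (∀ i : ℕ, 1 ≤ i → φ (x ^ i) = 0) ∧
    -- (4)
    ((∀ a : A, x * a = a * x) → (φ 1 = 1 ∧ ∀ a b : A, φ (a * b) = φ a * φ b)) := by
  have hWeyl := hδ.mul_mulLeft hx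
  have hDixmier : IsDixmierMap δ (LinearMap.mulLeft K x) φ := fun a N hN =>
    (hφ a N hN).trans (dixmierSum_mulLeft_apply δ x a N).symm
  have hproj : LinearMap.IsProj hδ.constants.toSubmodule φ := hDixmier.isProj_ker hWeyl hln
  have hker : LinearMap.ker φ = LinearMap.range (LinearMap.mulLeft K x) :=
    hDixmier.ker_eq_range hWeyl hln
  have hx_mul (b : A) : φ (x * b) = 0 := LinearMap.mem_ker.mp (hker ▸ ⟨b, rfl⟩)
  have hright : ∀ a ∈ LinearMap.ker φ, ∀ b, a * b ∈ LinearMap.ker φ :=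
    hker ▸ mul_right_mem_range_mulLeft
  refine ⟨fun a _ => map_mul_of_isProj_of_mem hproj hright a,
    fun a => ⟨hproj.map_mem a, ?_, ?_⟩, congrArg SetLike.coe hproj.range, hproj.map_id, ?_, ?_⟩
  · obtain ⟨b, hb⟩ := hker ▸ sub_apply_mem_ker_of_isProj hproj a
    exact ⟨b, hb.symm⟩
  · rintro y b hy rfl
    rw [map_add, hproj.map_id y hy, hx_mul, add_zero]
  · intro i hi
    rw [← mul_pow_sub_one (Nat.one_le_iff_ne_zero.mp hi), hx_mul]
  · exact fun hc => ⟨hproj.map_id 1 hδ.constants.one_mem,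
      map_mul_of_isProj hproj hright (hker ▸ mul_left_mem_range_mulLeft hc)⟩
end

section
/- Let K be a field of characteristic zero, m ≥ 1, and let σ be a K-algebra automorphism of the polynomial ring P_m = K[X_1, …, X_m]. Define deg σ := max_{1≤i≤m} totalDegree(σ(X_i)). Then deg σ^{-1} ≤ (deg σ)^{m−1}, i.e. max_{1≤i≤m} totalDegree(σ^{-1}(X_i)) ≤ (max_{1≤i≤m} totalDegree(σ(X_i)))^{m−1}. -/
/-!
The proof compares Hilbert series. Let `φ` be an injective endomorphism of the polynomial algebra
in `m` variables, `d` its degree, `p` a polynomial of degree `e`, and `t` the degree of `φ p`. Let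
`β` be the leading exponent of `p` for the degree-lexicographic order, so `|β| = e`. By division
with remainder, the products `p ^ b * X ^ α` with `β ≰ α` have pairwise distinct leading exponents
`b β + α`; hence they are linearly independent, and so are their images under `φ`, whose degrees
are at most `t b + d |α|`. Comparing with the Hilbert series `(1 - x)⁻ᵐ` of all monomials gives,
for `0 < x < 1`, `(1 - x ^ (d e)) (1 - x) ^ m ≤ (1 - x ^ t) (1 - x ^ d) ^ m`. Dividing by
`(1 - x) ^ (m + 1)` and letting `x → 1` yields `d e ≤ t d ^ m`. For `φ = σ` and `p = σ⁻¹(X i)` one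
has `t = 1`, so `e ≤ d ^ (m - 1)`.
-/

open MvPolynomial

open scoped ENNReal Topology

section GeneratingFunctions

variable {ι κ κ' : Type*}

theorem tsum_pow_sum_fin (n : ℕ) (x : ℝ≥0∞) :
    ∑' a : Fin n → ℕ, x ^ ∑ i, a i = ((1 - x)⁻¹) ^ n := by
  induction n with
  | zero => simp [tsum_fintype]
  | succ n ih =>
    rw [← (Fin.consEquiv fun _ => ℕ).tsum_eq, ENNReal.tsum_prod']
    simp only [Fin.consEquiv_apply, Fin.sum_univ_succ, Fin.cons_zero, Fin.cons_succ, pow_add,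
      ENNReal.tsum_mul_left, ENNReal.tsum_mul_right, ih, ENNReal.tsum_geometric, pow_succ']

theorem tsum_pow_degree [Fintype ι] (x : ℝ≥0∞) :
    ∑' α : ι →₀ ℕ, x ^ α.degree = ((1 - x)⁻¹) ^ Fintype.card ι := by
  let e : (ι →₀ ℕ) ≃ (Fin (Fintype.card ι) → ℕ) :=
    Finsupp.equivFunOnFinite.trans ((Fintype.equivFin ι).arrowCongr (Equiv.refl ℕ))
  rw [← tsum_pow_sum_fin, ← e.tsum_eq]
  refine tsum_congr fun α => ?_
  rw [Finsupp.degree_eq_sum, ← (Fintype.equivFin ι).symm.sum_comp]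
  rfl

theorem tsum_pow_degree_not_le_add (β : ι →₀ ℕ) (x : ℝ≥0∞) :
    ∑' α : {α // ¬ β ≤ α}, x ^ α.1.degree + x ^ β.degree * ∑' α : ι →₀ ℕ, x ^ α.degree =
      ∑' α : ι →₀ ℕ, x ^ α.degree := by
  let e : (ι →₀ ℕ) ≃ {α // β ≤ α} :=
    { toFun := fun α => ⟨β + α, le_self_add⟩
      invFun := fun α => α.1 - β
      left_inv := fun α => add_tsub_cancel_left β α
      right_inv := fun α => Subtype.ext (add_tsub_cancel_of_le α.2) }
  have shift : ∑' α : {α // β ≤ α}, x ^ α.1.degree =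
      x ^ β.degree * ∑' α : ι →₀ ℕ, x ^ α.degree := by
    rw [← e.tsum_eq, ← ENNReal.tsum_mul_left]
    simp [e, pow_add]
  rw [← shift, add_comm]
  exact ENNReal.summable.tsum_add_tsum_compl (f := fun α : ι →₀ ℕ => x ^ α.degree)
    (s := {α | β ≤ α}) ENNReal.summable

theorem tsum_pow_mul_inv_one_sub (w : κ → ℕ) (x : ℝ≥0∞) :
    (∑' k, x ^ w k) * (1 - x)⁻¹ = ∑' n, {k | w k ≤ n}.encard * x ^ n := by
  have tail (a : ℕ) : x ^ a * (1 - x)⁻¹ = ∑' n, if a ≤ n then x ^ n else 0 := by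
    have hsupp : Function.support (fun n => if a ≤ n then x ^ n else 0) ⊆ Set.range (a + ·) :=
      fun n hn => ⟨n - a, Nat.add_sub_cancel' (by_contra fun h => hn (if_neg h))⟩
    rw [← (add_right_injective a).tsum_eq hsupp, ← ENNReal.tsum_geometric, ← ENNReal.tsum_mul_left]
    simp only [le_add_iff_nonneg_right, zero_le, if_true, pow_add]
  simp only [← ENNReal.tsum_mul_right, tail]
  rw [ENNReal.tsum_comm]
  refine tsum_congr fun n => ?_
  rw [← ENNReal.tsum_set_const, tsum_subtype {k | w k ≤ n} fun _ => x ^ n]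
  simp only [Set.indicator_apply, Set.mem_ofPred_eq]

-- Multiplying by `(1 - x)⁻¹` turns both series into the series of their cumulative counts.
theorem tsum_pow_le_tsum_pow {w : κ → ℕ} {w' : κ' → ℕ}
    (h : ∀ n, {k | w k ≤ n}.encard ≤ {k | w' k ≤ n}.encard) {x : ℝ≥0∞} (hx : x < 1) :
    ∑' k, x ^ w k ≤ ∑' k, x ^ w' k := by
  have inv_ne_zero : (1 - x)⁻¹ ≠ 0 := by simp
  have inv_ne_top : (1 - x)⁻¹ ≠ ∞ := ENNReal.inv_ne_top.2 (tsub_pos_of_lt hx).ne'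
  rw [← ENNReal.mul_le_mul_iff_left inv_ne_zero inv_ne_top, tsum_pow_mul_inv_one_sub,
    tsum_pow_mul_inv_one_sub]
  gcongr with n
  exact h n

theorem le_mul_pow_of_one_sub_pow_mul_le {a b d m : ℕ}
    (h : ∀ x ∈ Set.Ioo (0 : ℝ) 1, (1 - x ^ a) * (1 - x) ^ m ≤ (1 - x ^ b) * (1 - x ^ d) ^ m) :
    a ≤ b * d ^ m := by
  let g (n : ℕ) (x : ℝ) : ℝ := ∑ i ∈ Finset.range n, x ^ i
  have hg (n : ℕ) : Filter.Tendsto (g n) (𝓝[<] 1) (𝓝 n) := by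
    refine (Continuous.tendsto' ?_ 1 (n : ℝ) ?_).mono_left nhdsWithin_le_nhds
    · fun_prop
    · simp [g]
  have hle : ∀ᶠ x in 𝓝[<] (1 : ℝ), g a x ≤ g b x * g d x ^ m := by
    filter_upwards [Ioo_mem_nhdsLT (zero_lt_one' ℝ)] with x hx
    refine le_of_mul_le_mul_right ?_ (pow_pos (sub_pos.2 hx.2) (m + 1))
    calc g a x * (1 - x) ^ (m + 1) = (1 - x ^ a) * (1 - x) ^ m := by
          rw [← geom_sum_mul_neg]
          ring
      _ ≤ (1 - x ^ b) * (1 - x ^ d) ^ m := h x hx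
      _ = g b x * g d x ^ m * (1 - x) ^ (m + 1) := by
          rw [← geom_sum_mul_neg, ← geom_sum_mul_neg, mul_pow]
          ring
  exact_mod_cast le_of_tendsto_of_tendsto (hg a) ((hg b).mul ((hg d).pow m)) hle

end GeneratingFunctions

section LinearIndependence

variable {ι κ R : Type*}

theorem encard_le_encard_of_mem_restrictSupport [CommRing R] [Nontrivial R]
    {v : κ → MvPolynomial ι R} {s : Set κ} {t : Set (ι →₀ ℕ)} (hv : LinearIndepOn R v s)
    (hst : ∀ k ∈ s, v k ∈ restrictSupport R t) : s.encard ≤ t.encard := by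
  have hmon : LinearIndepOn R (fun α : ι →₀ ℕ => monomial α (1 : R)) t := by
    have := (basisMonomials ι R).linearIndependent
    rw [coe_basisMonomials] at this
    exact this.linearIndepOn _
  rw [← toENat_rank_span_set hv, ← toENat_rank_span_set hmon, ← restrictSupport_eq_span]
  have hspan : Submodule.span R (v '' s) ≤ restrictSupport R t :=
    Submodule.span_le.2 (Set.image_subset_iff.2 hst)
  exact OrderHomClass.mono Cardinal.toENat (Submodule.rank_mono hspan)

theorem tsum_pow_le_of_linearIndependent [CommRing R] [Nontrivial R] [Fintype ι]
    {v : κ → MvPolynomial ι R} (hv : LinearIndependent R v) {w : κ → ℕ}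
    (hw : ∀ k, (v k).totalDegree ≤ w k) {x : ℝ≥0∞} (hx : x < 1) :
    ∑' k, x ^ w k ≤ ((1 - x)⁻¹) ^ Fintype.card ι := by
  rw [← tsum_pow_degree]
  refine tsum_pow_le_tsum_pow (fun n => ?_) hx
  have hn : ∀ k ∈ {k | w k ≤ n}, v k ∈ restrictSupport R {α | α.degree ≤ n} := fun k hk =>
    (mem_restrictTotalDegree _ _ _).2 ((hw k).trans hk)
  exact encard_le_encard_of_mem_restrictSupport (hv.linearIndepOn _) hn

theorem linearIndependent_of_injective_monomialOrder_degree [CommRing R] [NoZeroDivisors R]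
    (o : MonomialOrder ι) {v : κ → MvPolynomial ι R} (hv : ∀ k, v k ≠ 0)
    (hinj : Function.Injective fun k => o.degree (v k)) : LinearIndependent R v := by
  classical
  rw [linearIndependent_iff']
  intro s c hsum
  by_contra! hc
  have hne : (s.filter (c · ≠ 0)).Nonempty := by simpa [Finset.Nonempty] using hc
  obtain ⟨k₀, hk₀, hmax⟩ := Finset.exists_max_image _ (fun k => o.toSyn (o.degree (v k))) hne
  obtain ⟨hk₀s, hck₀⟩ := Finset.mem_filter.1 hk₀
  have hother : ∀ k ∈ s, k ≠ k₀ → coeff (o.degree (v k₀)) (c k • v k) = 0 := by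
    intro k hk hkk₀
    by_cases hck : c k = 0
    · rw [hck, zero_smul, coeff_zero]
    have hlt := (hmax k (Finset.mem_filter.2 ⟨hk, hck⟩)).lt_of_ne
      (o.toSyn.injective.ne (hinj.ne hkk₀))
    rw [coeff_smul, o.coeff_eq_zero_of_lt hlt, smul_zero]
  have hcoeff := congrArg (coeff (o.degree (v k₀))) hsum
  rw [coeff_sum, Finset.sum_eq_single_of_mem k₀ hk₀s hother, coeff_smul, coeff_zero] at hcoeff
  exact smul_ne_zero hck₀ (o.coeff_degree_ne_zero_iff.2 (hv k₀)) hcoeff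

theorem smul_add_injective_of_not_le (β : ι →₀ ℕ) :
    Function.Injective fun k : ℕ × {α // ¬ β ≤ α} => k.1 • β + k.2.1 := by
  rintro ⟨a, α, hα⟩ ⟨b, γ, hγ⟩ h
  dsimp only at h
  wlog hab : a ≤ b generalizing a b α γ
  · exact (this _ _ hγ _ _ hα h.symm (le_of_not_ge hab)).symm
  obtain ⟨c, rfl⟩ := Nat.exists_eq_add_of_le hab
  have hαγ : α = c • β + γ := add_left_cancel (a := a • β) (by rw [h, add_smul, add_assoc])
  obtain rfl : c = 0 := by
    by_contra hc
    exact hα (hαγ ▸ (le_self_nsmul zero_le hc).trans le_self_add)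
  simpa using hαγ

theorem linearIndependent_pow_mul_monomial [CommRing R] [IsDomain R] (o : MonomialOrder ι)
    {p : MvPolynomial ι R} (hp : p ≠ 0) :
    LinearIndependent R fun k : ℕ × {α // ¬ o.degree p ≤ α} =>
      p ^ k.1 * monomial k.2.1 (1 : R) := by
  have hmon (α : ι →₀ ℕ) : monomial α (1 : R) ≠ 0 := by simp
  refine linearIndependent_of_injective_monomialOrder_degree o
    (fun k => mul_ne_zero (pow_ne_zero _ hp) (hmon _)) ?_
  classical
  simpa only [o.degree_mul (pow_ne_zero _ hp) (hmon _), o.degree_pow, o.degree_monomial,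
    one_ne_zero, if_false] using smul_add_injective_of_not_le (o.degree p)

end LinearIndependence

section DegreeBound

variable {ι κ R : Type*}

theorem totalDegree_map_monomial_one_le [CommSemiring R]
    (φ : MvPolynomial ι R →ₐ[R] MvPolynomial κ R) {d : ℕ}
    (hd : ∀ i, (φ (X i)).totalDegree ≤ d) (α : ι →₀ ℕ) :
    (φ (monomial α 1)).totalDegree ≤ d * α.degree := by
  rw [monomial_eq, C_1, one_mul, Finsupp.prod, map_prod, Finsupp.degree_apply, Finset.mul_sum]
  refine (totalDegree_finsetProd _ _).trans (Finset.sum_le_sum fun i _ => ?_)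
  rw [map_pow, mul_comm]
  exact (totalDegree_pow _ _).trans (Nat.mul_le_mul_left _ (hd i))

theorem totalDegree_map_pow_mul_monomial_one_le [CommSemiring R]
    (φ : MvPolynomial ι R →ₐ[R] MvPolynomial κ R) {d : ℕ}
    (hd : ∀ i, (φ (X i)).totalDegree ≤ d) (p : MvPolynomial ι R) (n : ℕ) (α : ι →₀ ℕ) :
    (φ (p ^ n * monomial α 1)).totalDegree ≤ (φ p).totalDegree * n + d * α.degree := by
  rw [map_mul, map_pow, mul_comm _ n]
  exact (totalDegree_mul _ _).trans
    (add_le_add (totalDegree_pow _ _) (totalDegree_map_monomial_one_le φ hd α))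

theorem totalDegree_eq_zero_of_map [CommSemiring R]
    {φ : MvPolynomial ι R →ₐ[R] MvPolynomial κ R} (hφ : Function.Injective φ)
    {p : MvPolynomial ι R} (h : (φ p).totalDegree = 0) : p.totalDegree = 0 := by
  rw [totalDegree_eq_zero_iff_eq_C, ← algebraMap_eq, ← φ.commutes] at h
  rw [hφ h, algebraMap_eq, totalDegree_C]

theorem tsum_pow_degree_not_le_le [Fintype ι] [CommRing R] [IsDomain R] (o : MonomialOrder ι)
    {φ : MvPolynomial ι R →ₐ[R] MvPolynomial ι R} (hφ : Function.Injective φ) {d : ℕ}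
    (hd : ∀ i, (φ (X i)).totalDegree ≤ d) {p : MvPolynomial ι R} (hp : p ≠ 0)
    {x : ℝ≥0∞} (hx : x < 1) :
    ∑' α : {α // ¬ o.degree p ≤ α}, (x ^ d) ^ α.1.degree ≤
      (1 - x ^ (φ p).totalDegree) * ((1 - x)⁻¹) ^ Fintype.card ι := by
  have hind := (linearIndependent_pow_mul_monomial o hp).map' φ.toLinearMap
    (LinearMap.ker_eq_bot.2 hφ)
  have hsum : (1 - x ^ (φ p).totalDegree)⁻¹ *
      ∑' α : {α // ¬ o.degree p ≤ α}, (x ^ d) ^ α.1.degree ≤ ((1 - x)⁻¹) ^ Fintype.card ι := by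
    refine le_of_eq_of_le ?_ (tsum_pow_le_of_linearIndependent hind
      (fun k => totalDegree_map_pow_mul_monomial_one_le φ hd p k.1 k.2.1) hx)
    simp only [ENNReal.tsum_prod', pow_add, pow_mul, ENNReal.tsum_mul_left, ENNReal.tsum_mul_right,
      ENNReal.tsum_geometric]
  have hne_top : ((1 - x)⁻¹) ^ Fintype.card ι ≠ ∞ :=
    ENNReal.pow_ne_top (ENNReal.inv_ne_top.2 (tsub_pos_of_lt hx).ne')
  rw [mul_comm, ← div_eq_mul_inv,
    ENNReal.div_le_iff_le_mul (.inr hne_top) (.inl (by finiteness))] at hsum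
  rwa [mul_comm]

theorem inv_one_sub_pow_pow_card_le_add [Fintype ι] [CommRing R] [IsDomain R]
    {φ : MvPolynomial ι R →ₐ[R] MvPolynomial ι R} (hφ : Function.Injective φ) {d : ℕ}
    (hd : ∀ i, (φ (X i)).totalDegree ≤ d) {p : MvPolynomial ι R} (hp : p ≠ 0)
    {x : ℝ≥0∞} (hx : x < 1) :
    ((1 - x ^ d)⁻¹) ^ Fintype.card ι ≤
      (1 - x ^ (φ p).totalDegree) * ((1 - x)⁻¹) ^ Fintype.card ι +
        x ^ (d * p.totalDegree) * ((1 - x ^ d)⁻¹) ^ Fintype.card ι := by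
  let : LinearOrder ι := LinearOrder.lift' _ (Fintype.equivFin ι).injective
  rw [pow_mul, ← degree_degLexDegree (f := p), ← tsum_pow_degree (x ^ d)]
  nth_rw 1 [← tsum_pow_degree_not_le_add (MonomialOrder.degLex.degree p)]
  gcongr
  exact tsum_pow_degree_not_le_le MonomialOrder.degLex hφ hd hp hx

theorem one_sub_pow_mul_totalDegree_mul_le [Fintype ι] [CommRing R] [IsDomain R]
    {φ : MvPolynomial ι R →ₐ[R] MvPolynomial ι R} (hφ : Function.Injective φ) {d : ℕ}
    (hd : ∀ i, (φ (X i)).totalDegree ≤ d) (hd0 : d ≠ 0) {p : MvPolynomial ι R} (hp : p ≠ 0)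
    {x : ℝ} (hx : x ∈ Set.Ioo 0 1) :
    (1 - x ^ (d * p.totalDegree)) * (1 - x) ^ Fintype.card ι ≤
      (1 - x ^ (φ p).totalDegree) * (1 - x ^ d) ^ Fintype.card ι := by
  have hx0 : 0 ≤ x := hx.1.le
  have hpos : 0 < 1 - x := sub_pos.2 hx.2
  have hposd : 0 < 1 - x ^ d := sub_pos.2 (pow_lt_one₀ hx0 hx.2 hd0)
  have hnonneg : 0 ≤ 1 - x ^ (φ p).totalDegree := sub_nonneg.2 (pow_le_one₀ hx0 hx.2.le)
  have hofReal (n : ℕ) : ENNReal.ofReal (1 - x ^ n) = 1 - ENNReal.ofReal x ^ n := by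
    rw [ENNReal.ofReal_sub _ (by positivity), ENNReal.ofReal_one, ENNReal.ofReal_pow hx0]
  have hofReal_one : ENNReal.ofReal (1 - x) = 1 - ENNReal.ofReal x := by simpa using hofReal 1
  have hreal : ((1 - x ^ d)⁻¹) ^ Fintype.card ι ≤
      (1 - x ^ (φ p).totalDegree) * ((1 - x)⁻¹) ^ Fintype.card ι +
        x ^ (d * p.totalDegree) * ((1 - x ^ d)⁻¹) ^ Fintype.card ι := by
    rw [← ENNReal.ofReal_le_ofReal_iff (by positivity),
      ENNReal.ofReal_add (by positivity) (by positivity), ENNReal.ofReal_mul hnonneg,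
      ENNReal.ofReal_mul (by positivity), ENNReal.ofReal_pow (inv_nonneg.2 hposd.le),
      ENNReal.ofReal_pow (inv_nonneg.2 hpos.le), ENNReal.ofReal_pow hx0,
      ENNReal.ofReal_inv_of_pos hposd, ENNReal.ofReal_inv_of_pos hpos, hofReal, hofReal,
      hofReal_one]
    exact inv_one_sub_pow_pow_card_le_add hφ hd hp (ENNReal.ofReal_lt_one.2 hx.2)
  rw [inv_pow, inv_pow] at hreal
  field_simp at hreal
  linarith

theorem deg_inverse_polynomial_automorphism_general {ι R : Type*} [Fintype ι] [CommRing R]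
    [IsDomain R] {φ : MvPolynomial ι R →ₐ[R] MvPolynomial ι R} (hφ : Function.Injective φ)
    (p : MvPolynomial ι R) :
    p.totalDegree ≤ (φ p).totalDegree *
      (Finset.univ.sup fun i => (φ (X i)).totalDegree) ^ (Fintype.card ι - 1) := by
  rcases eq_or_ne p.totalDegree 0 with hp | hp
  · simp [hp]
  obtain ⟨i, -⟩ : p.vars.Nonempty := by
    rwa [Finset.nonempty_iff_ne_empty, Ne, vars_eq_empty_iff_eq_C, ← totalDegree_eq_zero_iff_eq_C]
  have : Nonempty ι := ⟨i⟩
  set d := Finset.univ.sup fun i => (φ (X i)).totalDegree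
  have hd (j : ι) : (φ (X j)).totalDegree ≤ d :=
    Finset.le_sup (f := fun j => (φ (X j)).totalDegree) (Finset.mem_univ j)
  have hd0 : d ≠ 0 := fun h => by
    have := totalDegree_eq_zero_of_map hφ (Nat.eq_zero_of_le_zero ((hd i).trans_eq h))
    simp at this
  have hp0 : p ≠ 0 := by rintro rfl; exact hp totalDegree_zero
  have key : d * p.totalDegree ≤ (φ p).totalDegree * d ^ Fintype.card ι :=
    le_mul_pow_of_one_sub_pow_mul_le fun _ => one_sub_pow_mul_totalDegree_mul_le hφ hd hd0 hp0
  rw [← Nat.sub_add_cancel Fintype.card_pos, pow_succ', mul_left_comm] at key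
  exact Nat.le_of_mul_le_mul_left key hd0.bot_lt

end DegreeBound

/-- **Theorem (Bass–Connell–Wright; Rusek–Winiarski).** For a `K`-algebra
automorphism `σ` of the polynomial algebra `P_m = K[X_1, …, X_m]` over a field
of characteristic zero (`m ≥ 1`), `deg σ⁻¹ ≤ (deg σ)^(m-1)`. -/
theorem deg_inverse_polynomial_automorphism
    {K : Type*} [Field K] [CharZero K] (m : ℕ) (hm : 1 ≤ m)
    (σ : MvPolynomial (Fin m) K ≃ₐ[K] MvPolynomial (Fin m) K) :
    (Finset.univ.sup fun i => (σ.symm (X i)).totalDegree)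
      ≤ (Finset.univ.sup fun i => (σ (X i)).totalDegree) ^ (m - 1) :=
  Finset.sup_le fun i _ => by
    simpa using deg_inverse_polynomial_automorphism_general (φ := σ.toAlgHom) σ.injective
      (σ.symm (X i))
end

section
/- Let K be a field of characteristic zero and let σ be a K-algebra endomorphism of the polynomial ring P_m = K[X_1, …, X_m] such that det(∂σ(X_i)/∂X_j) ∈ K∖{0} and σ(X_i) lies in the ideal (X_1, …, X_m) for every i. Let δ_1', …, δ_m' be the unique K-derivations of P_m satisfying δ_i'(σ(X_j)) = δ_{ij} for all i, j (they exist and are unique because the Jacobian matrix (∂σ(X_j)/∂X_k) is invertible over P_m). Then: (1) ∩_{i=1}^m ker δ_i' = K (the constant polynomials); (2) ∩_{i=1}^m N(δ_i', P_m) = σ(P_m), the image of σ, where N(δ, P_m) := {f ∈ P_m : δ^k(f) = 0 for some k ≥ 0}. -/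
open MvPolynomial

/-!
Put `y j = σ (X j)`. By the chain rule, `δ i (y j) = δᵢⱼ` says that the matrix `(δ i (X k))` is a
left inverse of the matrix `(∂(y j)/∂X k)` up to transposition, hence also a right inverse. So every
derivation is the combination `D = ∑ j, D (y j) • δ j` of the `δ j`. Applied to `∂/∂X k`, this shows
that a joint zero of the `δ j` is constant; applied to `[δ i, δ j]`, which kills every `y l`, it
shows that the `δ j` commute.

If `D y = 1` and `D ^ (k + 1)` kills `f`, then `D` kills `g = D ^ k f`, and subtracting
`y ^ k * g / k!` from `f` gives an element killed by `D ^ k`. Hence the nil algebra of `D` is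
generated by `y` and the kernel of `D`. Since the `δ j` commute, this can be done for one of them at
a time, and the joint nil algebra is generated by the `y j` and the joint kernel.
-/

section Derivation

variable {R A : Type*} [CommSemiring R] [CommSemiring A] [Algebra R A]

theorem derivation_sum_apply {M ι : Type*} [AddCommMonoid M] [Module A M] [Module R M]
    (s : Finset ι) (D : ι → Derivation R A M) (a : A) :
    (∑ i ∈ s, D i) a = ∑ i ∈ s, D i a :=
  (congrFun (map_sum Derivation.coeFnAddMonoidHom D s) a).trans (Finset.sum_apply _ _ _)

theorem derivation_pow_mul_eq_zero (D : Derivation R A A) {m n : ℕ} {f g : A}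
    (hf : (D.toLinearMap ^ m) f = 0) (hg : (D.toLinearMap ^ n) g = 0) :
    (D.toLinearMap ^ (m + n)) (f * g) = 0 := by
  induction hN : m + n generalizing m n f g with
  | zero =>
    obtain ⟨rfl, rfl⟩ := Nat.add_eq_zero_iff.mp hN
    simp_all
  | succ N ih =>
    rcases m with _ | m
    · simp_all
    rcases n with _ | n
    · simp_all
    have hfg : (D.toLinearMap ^ N) (f * D g) = 0 :=
      ih hf (by rwa [pow_succ, Module.End.mul_apply] at hg) (by lia)
    have hgf : (D.toLinearMap ^ N) (g * D f) = 0 :=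
      ih hg (by rwa [pow_succ, Module.End.mul_apply] at hf) (by lia)
    rw [pow_succ, Module.End.mul_apply, Derivation.coeFn_coe, D.leibniz, smul_eq_mul, smul_eq_mul,
      map_add, hfg, hgf, add_zero]

theorem derivation_pow_pow_mul {D : Derivation R A A} {y g : A} (hy : D y = 1) (hg : D g = 0)
    (n : ℕ) : (D.toLinearMap ^ n) (y ^ n * g) = n.factorial • g := by
  induction n with
  | zero => simp
  | succ n ih =>
    have hD : D (y ^ (n + 1) * g) = (n + 1) • (y ^ n * g) := by
      simp only [D.leibniz, D.leibniz_pow, hy, hg, smul_eq_mul, nsmul_eq_mul, Nat.add_sub_cancel]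
      ring
    rw [pow_succ, Module.End.mul_apply, Derivation.coeFn_coe, hD, map_nsmul, ih, smul_smul,
      Nat.factorial_succ]

/-- The ring of constants of the derivation `D`, that is, its kernel as a subalgebra. -/
def kerSubalgebra (D : Derivation R A A) : Subalgebra R A where
  carrier := {f | D f = 0}
  add_mem' hf hg := by simp_all
  mul_mem' hf hg := by simp_all
  algebraMap_mem' := D.map_algebraMap

@[simp]
theorem mem_kerSubalgebra {D : Derivation R A A} {f : A} : f ∈ kerSubalgebra D ↔ D f = 0 :=
  Iff.rfl

/-- The nil algebra `N(D, A)` of the derivation `D`: the elements killed by some power of `D`. -/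
def nilSubalgebra (D : Derivation R A A) : Subalgebra R A where
  carrier := {f | ∃ k : ℕ, (D.toLinearMap ^ k) f = 0}
  add_mem' := by
    rintro f g ⟨m, hf⟩ ⟨n, hg⟩
    refine ⟨max m n, ?_⟩
    rw [map_add, Module.End.pow_map_zero_of_le (le_max_left m n) hf,
      Module.End.pow_map_zero_of_le (le_max_right m n) hg, add_zero]
  mul_mem' := by
    rintro f g ⟨m, hf⟩ ⟨n, hg⟩
    exact ⟨m + n, derivation_pow_mul_eq_zero D hf hg⟩
  algebraMap_mem' r := ⟨1, by simp⟩

@[simp]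
theorem mem_nilSubalgebra {D : Derivation R A A} {f : A} :
    f ∈ nilSubalgebra D ↔ ∃ k : ℕ, (D.toLinearMap ^ k) f = 0 :=
  Iff.rfl

theorem kerSubalgebra_le_nilSubalgebra (D : Derivation R A A) :
    kerSubalgebra D ≤ nilSubalgebra D :=
  fun f hf => ⟨1, by simpa using hf⟩

theorem mem_nilSubalgebra_of_apply_mem {D : Derivation R A A} {f : A}
    (hf : D f ∈ nilSubalgebra D) : f ∈ nilSubalgebra D := by
  obtain ⟨k, hk⟩ := hf
  exact ⟨k + 1, by rwa [pow_succ, Module.End.mul_apply]⟩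

variable {D E : Derivation R A A}

theorem apply_mem_kerSubalgebra_of_commute (h : Commute D.toLinearMap E.toLinearMap) {f : A}
    (hf : f ∈ kerSubalgebra D) : E f ∈ kerSubalgebra D := by
  have hDE : D (E f) = E (D f) := LinearMap.congr_fun h f
  rw [mem_kerSubalgebra, hDE, hf, map_zero]

theorem apply_mem_nilSubalgebra_of_commute (h : Commute D.toLinearMap E.toLinearMap) {f : A}
    (hf : f ∈ nilSubalgebra D) : E f ∈ nilSubalgebra D := by
  obtain ⟨k, hk⟩ := hf
  have hDE : (D.toLinearMap ^ k) (E f) = E ((D.toLinearMap ^ k) f) :=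
    LinearMap.congr_fun (h.pow_left k) f
  exact ⟨k, by rw [hDE, hk, map_zero]⟩

/-- The derivations `δ` are dual to the elements `y`, as the partial derivatives are to the
variables of a polynomial ring. -/
def IsDualSystem {ι : Type*} [DecidableEq ι] (δ : ι → Derivation R A A) (y : ι → A) : Prop :=
  ∀ i j, δ i (y j) = if i = j then 1 else 0

theorem IsDualSystem.mem_nilSubalgebra {ι : Type*} [DecidableEq ι] {δ : ι → Derivation R A A}
    {y : ι → A} (hδ : IsDualSystem δ y) (i j : ι) : y j ∈ nilSubalgebra (δ i) := by
  refine mem_nilSubalgebra_of_apply_mem ?_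
  rw [hδ i j]
  split_ifs
  exacts [one_mem _, zero_mem _]

end Derivation

section Slice

variable {R A : Type*} [CommRing R] [Algebra ℚ R] [CommRing A] [Algebra R A]

theorem inf_nilSubalgebra_le_of_apply_eq_one {D : Derivation R A A} {y : A} (hy : D y = 1)
    {W : Subalgebra R A} (hDW : ∀ f ∈ W, D f ∈ W) (hyW : y ∈ W) :
    W ⊓ nilSubalgebra D ≤ (W ⊓ kerSubalgebra D) ⊔ Algebra.adjoin R {y} := by
  set B := (W ⊓ kerSubalgebra D) ⊔ Algebra.adjoin R {y}
  rintro f ⟨hfW, k, hk⟩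
  induction k generalizing f with
  | zero =>
    obtain rfl : f = 0 := by simpa using hk
    exact zero_mem B
  | succ k ih =>
    set g := (D.toLinearMap ^ k) f with hg
    have hDg : D g = 0 := by rwa [pow_succ', Module.End.mul_apply] at hk
    have hgW : g ∈ W :=
      Module.End.pow_apply_mem_of_forall_mem (p := Subalgebra.toSubmodule W) k hDW f hfW
    have hgB : g ∈ B := le_sup_left (a := W ⊓ kerSubalgebra D) ⟨hgW, hDg⟩
    have hyB : y ∈ B :=
      le_sup_right (a := W ⊓ kerSubalgebra D) (Algebra.self_mem_adjoin_singleton R y)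
    obtain ⟨c, hc⟩ : ∃ c : R, c * (k.factorial : R) = 1 :=
      (IsUnit.natCast_factorial_of_algebra ℚ k).exists_left_inv
    have hDk : (D.toLinearMap ^ k) (f - c • (y ^ k * g)) = 0 := by
      rw [map_sub, map_smul, derivation_pow_pow_mul hy hDg, ← Nat.cast_smul_eq_nsmul R, smul_smul,
        hc, one_smul, ← hg, sub_self]
    have hsubB : f - c • (y ^ k * g) ∈ B :=
      ih (sub_mem hfW (W.smul_mem (mul_mem (pow_mem hyW k) hgW) c)) hDk
    simpa using add_mem hsubB (B.smul_mem (mul_mem (pow_mem hyB k) hgB) c)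

variable {ι : Type*} [DecidableEq ι] {δ : ι → Derivation R A A} {y : ι → A}

theorem IsDualSystem.inf_iInf_nilSubalgebra_le (hδ : IsDualSystem δ y)
    (hcomm : ∀ i j, Commute (δ i).toLinearMap (δ j).toLinearMap) (s : Finset ι)
    {W : Subalgebra R A} (hδW : ∀ i, ∀ f ∈ W, δ i f ∈ W) (hyW : ∀ j, y j ∈ W) :
    W ⊓ ⨅ i ∈ s, nilSubalgebra (δ i) ≤
      (W ⊓ ⨅ i ∈ s, kerSubalgebra (δ i)) ⊔ Algebra.adjoin R (Set.range y) := by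
  induction s using Finset.induction_on generalizing W with
  | empty => simp
  | insert j s hj ih =>
    have hδW_nil (i : ι) : ∀ f ∈ W ⊓ nilSubalgebra (δ j), δ i f ∈ W ⊓ nilSubalgebra (δ j) :=
      fun f hf => ⟨hδW i f hf.1, apply_mem_nilSubalgebra_of_commute (hcomm j i) hf.2⟩
    have hyW_nil (l : ι) : y l ∈ W ⊓ nilSubalgebra (δ j) :=
      ⟨hyW l, hδ.mem_nilSubalgebra j l⟩
    set V := W ⊓ ⨅ i ∈ s, kerSubalgebra (δ i)
    have hδV : ∀ f ∈ V, δ j f ∈ V := by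
      simp only [V, Algebra.mem_inf, Algebra.mem_iInf]
      exact fun f hf =>
        ⟨hδW j f hf.1, fun i hi => apply_mem_kerSubalgebra_of_commute (hcomm i j) (hf.2 i hi)⟩
    have hyV : y j ∈ V := by
      simp only [V, Algebra.mem_inf, Algebra.mem_iInf, mem_kerSubalgebra]
      exact ⟨hyW j, fun i hi => by rw [hδ i j, if_neg (ne_of_mem_of_not_mem hi hj)]⟩
    have hyj : Algebra.adjoin R {y j} ≤ Algebra.adjoin R (Set.range y) :=
      Algebra.adjoin_mono (Set.singleton_subset_iff.mpr ⟨j, rfl⟩)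
    simp_rw [Finset.iInf_insert, ← inf_assoc]
    calc W ⊓ nilSubalgebra (δ j) ⊓ ⨅ i ∈ s, nilSubalgebra (δ i)
        ≤ (W ⊓ nilSubalgebra (δ j) ⊓ ⨅ i ∈ s, kerSubalgebra (δ i)) ⊔
            Algebra.adjoin R (Set.range y) := ih hδW_nil hyW_nil
      _ = (V ⊓ nilSubalgebra (δ j)) ⊔ Algebra.adjoin R (Set.range y) := by rw [inf_right_comm]
      _ ≤ ((V ⊓ kerSubalgebra (δ j)) ⊔ Algebra.adjoin R {y j}) ⊔
            Algebra.adjoin R (Set.range y) := by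
          gcongr
          exact inf_nilSubalgebra_le_of_apply_eq_one (by simp [hδ j j]) hδV hyV
      _ = (W ⊓ kerSubalgebra (δ j) ⊓ ⨅ i ∈ s, kerSubalgebra (δ i)) ⊔
            Algebra.adjoin R (Set.range y) := by
          rw [sup_assoc, sup_eq_right.mpr hyj, inf_right_comm]

theorem IsDualSystem.iInf_nilSubalgebra_eq_iInf_kerSubalgebra_sup_adjoin [Finite ι]
    (hδ : IsDualSystem δ y) (hcomm : ∀ i j, Commute (δ i).toLinearMap (δ j).toLinearMap) :
    ⨅ i, nilSubalgebra (δ i) = (⨅ i, kerSubalgebra (δ i)) ⊔ Algebra.adjoin R (Set.range y) := by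
  cases nonempty_fintype ι
  refine le_antisymm ?_ (sup_le (iInf_mono fun i => kerSubalgebra_le_nilSubalgebra (δ i)) ?_)
  · simpa using hδ.inf_iInf_nilSubalgebra_le hcomm (W := ⊤) Finset.univ (by simp) (by simp)
  · refine le_iInf fun i => Algebra.adjoin_le ?_
    rintro _ ⟨j, rfl⟩
    exact hδ.mem_nilSubalgebra i j

end Slice

section MvPolynomial

variable {R ι : Type*}

theorem iInf_kerSubalgebra_pderiv_eq_bot [CommSemiring R] [IsAddTorsionFree R] :
    ⨅ i : ι, kerSubalgebra (pderiv (R := R) i) = ⊥ := by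
  refine eq_bot_iff.mpr fun f hf => Algebra.mem_bot.mpr ⟨coeff 0 f, ?_⟩
  have hpderiv (i : ι) : pderiv i f = 0 := (Algebra.mem_iInf.mp hf) i
  classical
  ext s
  rw [algebraMap_eq, coeff_C]
  split_ifs with hs
  · rw [hs]
  · obtain ⟨i, hi⟩ : ∃ i, s i ≠ 0 := by
      by_contra! hcon
      exact hs (Finsupp.ext fun i => (hcon i).symm)
    obtain ⟨t, rfl⟩ : ∃ t, s = t + Finsupp.single i 1 :=
      ⟨s - Finsupp.single i 1, (tsub_add_cancel_of_le (by simpa [Nat.one_le_iff_ne_zero])).symm⟩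
    have hcoeff : (t i + 1) • coeff (t + Finsupp.single i 1) f = 0 := by
      simpa [coeff_pderiv, mul_comm] using congrArg (coeff t) (hpderiv i)
    exact ((smul_eq_zero_iff_right (Nat.succ_ne_zero _)).mp hcoeff).symm

theorem derivation_apply_eq_sum_pderiv_smul [CommSemiring R] [Fintype ι] {M : Type*}
    [AddCommMonoid M] [Module R M] [Module (MvPolynomial ι R) M]
    [IsScalarTower R (MvPolynomial ι R) M]
    (D : Derivation R (MvPolynomial ι R) M) (f : MvPolynomial ι R) :
    D f = ∑ k, pderiv k f • D (X k) := by
  classical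
  have hD : D = ∑ k, (LinearMap.toSpanSingleton _ M (D (X k))).compDer (pderiv k) :=
    derivation_ext fun i => by simp [derivation_sum_apply, pderiv_X, Pi.single_apply]
  simpa [derivation_sum_apply] using congr($hD f)

variable [CommRing R] [DecidableEq ι] {y : ι → MvPolynomial ι R}
  {δ : ι → Derivation R (MvPolynomial ι R) (MvPolynomial ι R)}

theorem IsDualSystem.sum_apply_X_mul_pderiv [Fintype ι] (hδ : IsDualSystem δ y) (k l : ι) :
    ∑ j, δ j (X l) * pderiv k (y j) = if k = l then 1 else 0 := by
  have hmul : (Matrix.of fun i k => δ i (X k)) * (Matrix.of fun k j => pderiv k (y j)) = 1 := by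
    ext1 i j
    simp [Matrix.mul_apply, Matrix.one_apply, ← hδ i j,
      derivation_apply_eq_sum_pderiv_smul (δ i) (y j), mul_comm]
  simpa [Matrix.mul_apply, Matrix.one_apply, mul_comm] using congr($(mul_eq_one_comm.mp hmul) k l)

theorem IsDualSystem.derivation_apply_eq_sum_smul [Fintype ι] {M : Type*} [AddCommMonoid M]
    [Module R M] [Module (MvPolynomial ι R) M] [IsScalarTower R (MvPolynomial ι R) M]
    (hδ : IsDualSystem δ y) (D : Derivation R (MvPolynomial ι R) M)
    (f : MvPolynomial ι R) :
    D f = ∑ j, δ j f • D (y j) := by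
  have hD : D = ∑ j, (LinearMap.toSpanSingleton _ M (D (y j))).compDer (δ j) := by
    refine derivation_ext fun l => ?_
    calc D (X l) = ∑ k, (∑ j, δ j (X l) * pderiv k (y j)) • D (X k) := by
          simp [hδ.sum_apply_X_mul_pderiv]
      _ = ∑ j, δ j (X l) • ∑ k, pderiv k (y j) • D (X k) := by
          simp_rw [Finset.sum_smul, Finset.smul_sum, smul_smul]
          exact Finset.sum_comm
      _ = (∑ j, (LinearMap.toSpanSingleton _ M (D (y j))).compDer (δ j)) (X l) := by
          simp [derivation_sum_apply, ← derivation_apply_eq_sum_pderiv_smul]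
  simpa [derivation_sum_apply] using congr($hD f)

theorem IsDualSystem.commute [Finite ι] (hδ : IsDualSystem δ y) (i j : ι) :
    Commute (δ i).toLinearMap (δ j).toLinearMap := by
  cases nonempty_fintype ι
  have hbracket (l : ι) : ⁅δ i, δ j⁆ (y l) = 0 := by
    rw [Derivation.commutator_apply, hδ j l, hδ i l]
    split_ifs <;> simp
  refine LinearMap.ext fun f => sub_eq_zero.mp ?_
  calc ⁅δ i, δ j⁆ f = ∑ l, δ l f • ⁅δ i, δ j⁆ (y l) := hδ.derivation_apply_eq_sum_smul _ f
    _ = 0 := by simp [hbracket]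

theorem IsDualSystem.iInf_kerSubalgebra_eq_bot [Finite ι] [IsAddTorsionFree R]
    (hδ : IsDualSystem δ y) : ⨅ i, kerSubalgebra (δ i) = ⊥ := by
  cases nonempty_fintype ι
  refine eq_bot_iff.mpr fun f hf => ?_
  rw [← iInf_kerSubalgebra_pderiv_eq_bot, Algebra.mem_iInf]
  intro k
  simp only [Algebra.mem_iInf, mem_kerSubalgebra] at hf
  simp [hδ.derivation_apply_eq_sum_smul (pderiv k) f, hf]

end MvPolynomial

theorem kernels_and_nil_spaces_of_jacobian_endomorphism_general
    {R ι : Type*} [CommRing R] [Algebra ℚ R] [Finite ι] [DecidableEq ι]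
    (σ : MvPolynomial ι R →ₐ[R] MvPolynomial ι R)
    (δ : ι → Derivation R (MvPolynomial ι R) (MvPolynomial ι R))
    (hδ : ∀ i j, δ i (σ (X j)) = if i = j then 1 else 0) :
    (∀ f : MvPolynomial ι R, (∀ i, δ i f = 0) ↔ ∃ c : R, f = C c) ∧
    (∀ f : MvPolynomial ι R,
      (∀ i, ∃ k : ℕ, ((δ i).toLinearMap ^ k) f = 0) ↔ f ∈ Set.range σ) := by
  have : IsAddTorsionFree R := .of_module_rat R
  have hδ' : IsDualSystem δ (σ ∘ X) := hδ
  have hker : ⨅ i, kerSubalgebra (δ i) = ⊥ := hδ'.iInf_kerSubalgebra_eq_bot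
  have hnil : ⨅ i, nilSubalgebra (δ i) = σ.range := by
    rw [hδ'.iInf_nilSubalgebra_eq_iInf_kerSubalgebra_sup_adjoin hδ'.commute, hker,
      bot_sup_eq, Set.range_comp, ← AlgHom.map_adjoin, adjoin_range_X, Algebra.map_top]
  refine ⟨fun f => ?_, fun f => ?_⟩
  · simpa [Algebra.mem_iInf, Algebra.mem_bot, algebraMap_eq, eq_comm] using
      SetLike.ext_iff.mp hker f
  · simpa [Algebra.mem_iInf] using SetLike.ext_iff.mp hnil f

/-- **Corollary.** Let `σ` be a `K`-algebra endomorphism of `P_m = K[X_1, …, X_m]`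
(char `K = 0`) with Jacobian determinant a nonzero scalar and `σ(X_i)` of zero
constant term (i.e. `σ(X_i) ∈ (X_1, …, X_m)`), and let `δ_1', …, δ_m'` be the
(unique) `K`-derivations with `δ_i'(σ(X_j)) = δ_{ij}`. Then
(1) `∩ ker δ_i' = K`; and (2) `∩ N(δ_i', P_m) = σ(P_m)`. -/
theorem kernels_and_nil_spaces_of_jacobian_endomorphism
    {K : Type*} [Field K] [CharZero K] (m : ℕ)
    (σ : MvPolynomial (Fin m) K →ₐ[K] MvPolynomial (Fin m) K)
    (hJ : ∃ c : K, c ≠ 0 ∧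
      (Matrix.of fun i j : Fin m => pderiv j (σ (X i))).det = C c)
    (hm : ∀ i, constantCoeff (σ (X i)) = 0)
    (δ' : Fin m → Derivation K (MvPolynomial (Fin m) K) (MvPolynomial (Fin m) K))
    (hδ' : ∀ i j, δ' i (σ (X j)) = if i = j then 1 else 0) :
    -- (1) the joint kernel of the `δ_i'` consists of the constants
    (∀ f : MvPolynomial (Fin m) K, (∀ i, δ' i f = 0) ↔ ∃ c : K, f = C c) ∧
    -- (2) the joint locally nilpotent part is the image of `σ`
    (∀ f : MvPolynomial (Fin m) K,
      (∀ i, ∃ k : ℕ, ((δ' i).toLinearMap ^ k) f = 0) ↔ f ∈ Set.range σ) :=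
  kernels_and_nil_spaces_of_jacobian_endomorphism_general σ δ' hδ'
end

section
/- Let A be an associative unital algebra over a field K of characteristic zero and let δ_1, …, δ_s be pairwise commuting locally nilpotent K-derivations of A with generic kernels such that Γ := ∩_{i=1}^s ker δ_i is a division ring and Γ ≠ A. Then there exist nonzero elements x_1, …, x_s ∈ A with x_i ∈ ∩_{j≠i} ker δ_j for each i and δ_i(x_j) = δ_{ij}·1 for all i, j. -/
/-- Derivations have *generic kernels* if distinct subsets `I ⊆ {1,…,s}` give
distinct intersections `∩_{i ∈ I} ker δ_i`. -/
def GenericKernels {K A : Type*} [CommRing K] [Ring A] [Algebra K A]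
    {s : ℕ} (δ : Fin s → (A →ₗ[K] A)) : Prop :=
  ∀ I J : Set (Fin s),
    (⨅ i ∈ I, LinearMap.ker (δ i)) = (⨅ i ∈ J, LinearMap.ker (δ i)) → I = J

theorem iInf_ker_mem_invtSubmodule_of_commute {R M ι : Type*} [Semiring R] [AddCommMonoid M]
    [Module R M] {f : Module.End R M} {g : ι → Module.End R M} {I : Set ι}
    (hcomm : ∀ i ∈ I, Commute (g i) f) :
    ⨅ i ∈ I, LinearMap.ker (g i) ∈ f.invtSubmodule := by
  rw [Module.End.mem_invtSubmodule_iff_forall_mem_of_mem]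
  intro y hy
  simp only [Submodule.mem_iInf, LinearMap.mem_ker] at hy ⊢
  intro i hi
  calc g i (f y) = f (g i y) := LinearMap.congr_fun (hcomm i hi).eq y
    _ = 0 := by rw [hy i hi, map_zero]

theorem exists_mem_apply_ne_zero_apply_apply_eq_zero {R M : Type*} [Semiring R] [AddCommMonoid M]
    [Module R M] {f : Module.End R M} {N : Submodule R M} (hN : N ∈ f.invtSubmodule) {y : M}
    (hyN : y ∈ N) (hy : f y ≠ 0) (hnil : ∃ k : ℕ, (f ^ k) y = 0) :
    ∃ z ∈ N, f z ≠ 0 ∧ f (f z) = 0 := by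
  have hvanish : ∃ k : ℕ, f ((f ^ k) y) = 0 := hnil.imp fun k hk => by rw [hk, map_zero]
  obtain ⟨n, hn, hn'⟩ := Nat.exists_not_and_succ_of_not_zero_of_exists hy hvanish
  refine ⟨(f ^ n) y, ?_, hn, ?_⟩
  · rw [Module.End.pow_apply]
    exact Set.MapsTo.iterate hN n hyN
  · rwa [pow_succ', Module.End.mul_apply] at hn'

theorem IsDerivation.map_mul_of_map_left_eq_zero {R A : Type*} [CommRing R] [Ring A] [Algebra R A]
    {δ : A →ₗ[R] A} (hδ : IsDerivation δ) {a : A} (ha : δ a = 0) (b : A) :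
    δ (a * b) = a * δ b := by
  rw [hδ, ha, zero_mul, zero_add]

theorem GenericKernels.not_iInf_ker_le_ker {R A : Type*} [CommRing R] [Ring A] [Algebra R A]
    {s : ℕ} {δ : Fin s → (A →ₗ[R] A)} (hδ : GenericKernels δ) (i : Fin s) :
    ¬ ⨅ j ∈ ({i}ᶜ : Set (Fin s)), LinearMap.ker (δ j) ≤ LinearMap.ker (δ i) := by
  intro hle
  have hker : ⨅ j ∈ insert i ({i}ᶜ : Set (Fin s)), LinearMap.ker (δ j) =
      ⨅ j ∈ ({i}ᶜ : Set (Fin s)), LinearMap.ker (δ j) := by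
    rw [iInf_insert, inf_eq_right.mpr hle]
  exact Set.insert_eq_self.mp (hδ _ _ hker) rfl

theorem exists_slice_of_not_iInf_ker_le_ker {R A ι : Type*} [CommRing R] [Ring A] [Algebra R A]
    {δ : ι → (A →ₗ[R] A)} {i : ι} (hder : ∀ j, IsDerivation (δ j))
    (hcomm : ∀ j, (δ j).comp (δ i) = (δ i).comp (δ j))
    (hln : ∀ a : A, ∃ k : ℕ, (δ i ^ k) a = 0)
    (hker : ¬ ⨅ j ∈ ({i}ᶜ : Set ι), LinearMap.ker (δ j) ≤ LinearMap.ker (δ i))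
    (hinv : ∀ a : A, (∀ j, δ j a = 0) → a ≠ 0 → ∃ b : A, (∀ j, δ j b = 0) ∧ b * a = 1) :
    ∃ x : A, δ i x = 1 ∧ ∀ j ≠ i, δ j x = 0 := by
  have hinvt : ⨅ j ∈ ({i}ᶜ : Set ι), LinearMap.ker (δ j) ∈ Module.End.invtSubmodule (δ i) :=
    iInf_ker_mem_invtSubmodule_of_commute fun j _ => hcomm j
  obtain ⟨y, hy, hiy⟩ := SetLike.not_le_iff_exists.mp hker
  obtain ⟨z, hz, hiz, hiiz⟩ :=
    exists_mem_apply_ne_zero_apply_apply_eq_zero hinvt hy hiy (hln y)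
  have apply_eq_zero {w : A} (hw : w ∈ ⨅ j ∈ ({i}ᶜ : Set ι), LinearMap.ker (δ j)) (j : ι)
      (hj : j ≠ i) : δ j w = 0 := by
    simp only [Submodule.mem_iInf] at hw
    exact hw j hj
  have hΓ : ∀ j, δ j (δ i z) = 0 := fun j => by
    obtain rfl | hj := eq_or_ne j i
    · exact hiiz
    · exact apply_eq_zero (hinvt hz) j hj
  obtain ⟨b, hb, hbz⟩ := hinv (δ i z) hΓ hiz
  refine ⟨b * z, ?_, fun j hj => ?_⟩
  · rw [(hder i).map_mul_of_map_left_eq_zero (hb i), hbz]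
  · rw [(hder j).map_mul_of_map_left_eq_zero (hb j), apply_eq_zero hz j hj, mul_zero]

theorem exists_slices_of_commuting_ln_derivations_general {R A ι : Type*} [CommRing R] [Ring A]
    [Algebra R A] [DecidableEq ι] (δ : ι → (A →ₗ[R] A))
    (hder : ∀ i, IsDerivation (δ i))
    (hcomm : ∀ i j, (δ i).comp (δ j) = (δ j).comp (δ i))
    (hln : ∀ i (a : A), ∃ k : ℕ, (δ i ^ k) a = 0)
    (hker : ∀ i, ¬ ⨅ j ∈ ({i}ᶜ : Set ι), LinearMap.ker (δ j) ≤ LinearMap.ker (δ i))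
    (hinv : ∀ a : A, (∀ i, δ i a = 0) → a ≠ 0 → ∃ b : A, (∀ i, δ i b = 0) ∧ b * a = 1) :
    ∃ x : ι → A,
      (∀ i, x i ≠ 0) ∧
      (∀ i j, δ i (x j) = if i = j then (1 : A) else 0) := by
  choose x hx_self hx_other using fun i =>
    exists_slice_of_not_iInf_ker_le_ker hder (hcomm · i) (hln i) (hker i) hinv
  refine ⟨x, fun i hxi => ?_, fun i j => ?_⟩
  · obtain ⟨y, -, hy⟩ := SetLike.not_le_iff_exists.mp (hker i)
    have : Nontrivial A := nontrivial_of_ne _ _ hy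
    have h : (0 : A) = 1 := by rw [← hx_self i, hxi, map_zero]
    exact zero_ne_one h
  · split_ifs with hij
    · rw [hij, hx_self]
    · exact hx_other j i hij

/-- **Lemma.** Let `δ_1, …, δ_s` be commuting locally nilpotent `K`-derivations
of `A` (char `K = 0`) with generic kernels, such that `Γ := ∩ ker δ_i` is a
division ring and `Γ ≠ A`. Then there are nonzero `x_1, …, x_s ∈ A` with
`x_i ∈ ∩_{j ≠ i} ker δ_j` and `δ_i(x_j) = δ_{ij}`. -/
theorem exists_slices_of_commuting_ln_derivations
    {K A : Type*} [Field K] [CharZero K] [Ring A] [Algebra K A]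
    {s : ℕ} (δ : Fin s → (A →ₗ[K] A))
    (hder : ∀ i, IsDerivation (δ i))
    (hcomm : ∀ i j, (δ i).comp (δ j) = (δ j).comp (δ i))
    (hln : ∀ i (a : A), ∃ k : ℕ, (δ i ^ k) a = 0)
    (hgen : GenericKernels δ)
    -- `Γ = ∩ ker δ_i` is a division ring:
    (hdiv : ∀ a : A, (∀ i, δ i a = 0) → a ≠ 0 →
      ∃ b : A, (∀ i, δ i b = 0) ∧ a * b = 1 ∧ b * a = 1)
    -- and `Γ ≠ A`:
    (hne : ∃ a : A, ¬ (∀ i, δ i a = 0)) :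
    ∃ x : Fin s → A,
      (∀ i, x i ≠ 0) ∧
      (∀ i j, δ i (x j) = if i = j then (1 : A) else 0) := by
  exact exists_slices_of_commuting_ln_derivations_general δ hder hcomm hln hgen.not_iInf_ker_le_ker
    fun a ha ha0 => (hdiv a ha ha0).imp fun _ hb => ⟨hb.1, hb.2.2⟩
end

section
/- Let A be an associative unital algebra over a field K of characteristic zero, let δ_1, …, δ_s be pairwise commuting locally nilpotent K-derivations of A, and suppose there are elements x_1, …, x_s ∈ A with δ_i(x_j) = δ_{ij}·1 for all i, j. Set C := ∩_{i=1}^s ker δ_i. Then x_i x_j − x_j x_i ∈ C for all i, j, and A = ⊕_{α∈ℕ^s} C·x^α, i.e. the ordered monomials x^α := x_1^{α_1}⋯x_s^{α_s} (α ∈ ℕ^s) form a basis of A as a free left C-module. -/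
/-- The ordered monomial `x^α := x 0 ^ α 0 * x 1 ^ α 1 * ⋯ * x (s-1) ^ α (s-1)`. -/
def mon {A : Type*} [Ring A] {s : ℕ} (x : Fin s → A) (α : Fin s → ℕ) : A :=
  ((List.finRange s).map fun i => x i ^ α i).prod

/-!
Write `δ^β` for the ordered monomial `mon δ β` in the ring of `K`-linear endomorphisms of `A`. Since
`δ i (x i) = 1` is central and `δ i (x j) = 0` for `j ≠ i`, the power rule
`δ^β (x^α) = ∏ i, α_i (α_i - 1) ⋯ (α_i - β_i + 1) • x^(α - β)` holds although the `x i` need not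
commute. In particular `δ^β (x^α) = 0` unless `β ≤ α`, and `δ^α (x^α) = α!`.

*Independence.* If `α` is maximal in the support of a relation `∑ c_β x^β = 0` with constant
coefficients, applying `δ^α` leaves `α! c_α = 0`.

*Generation.* By commutation and local nilpotence, `δ^β a = 0` for all `β` of large total degree. If
this holds for `|β| > m`, then `δ^β a` is a constant for `|β| = m`, and subtracting the Taylor terms
`(β!)⁻¹ (δ^β a) x^β` with `|β| = m` from `a` lowers `m`.
-/

namespace IsDerivation

variable {K A : Type*} [CommRing K] [Ring A] [Algebra K A] {d : A →ₗ[K] A}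

protected theorem map_one (hd : IsDerivation d) : d 1 = 0 := by
  simpa using hd 1 1

theorem map_mul_sub_mul_eq_zero (hd : IsDerivation d) {a b : A} (hab : Commute (d a) b)
    (hba : Commute a (d b)) : d (a * b - b * a) = 0 := by
  rw [map_sub, hd, hd, hab.eq, hba.eq]
  abel

/-- The kernel of a derivation, as a subalgebra. -/
def ker (hd : IsDerivation d) : Subalgebra K A where
  carrier := {a | d a = 0}
  mul_mem' {a b} ha hb := by
    rw [Set.mem_ofPred_eq] at ha hb ⊢
    rw [hd, ha, hb, zero_mul, mul_zero, add_zero]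
  add_mem' {a b} ha hb := by
    rw [Set.mem_ofPred_eq] at ha hb ⊢
    rw [map_add, ha, hb, add_zero]
  algebraMap_mem' r := by
    rw [Set.mem_ofPred_eq, Algebra.algebraMap_eq_smul_one, map_smul, hd.map_one, smul_zero]

theorem mem_ker (hd : IsDerivation d) {a : A} : a ∈ hd.ker ↔ d a = 0 := Iff.rfl

theorem commute_mulLeft (hd : IsDerivation d) {c : A} (hc : c ∈ hd.ker) :
    Commute d (LinearMap.mulLeft K c) :=
  LinearMap.ext fun a => by simp [hd c a, hd.mem_ker.1 hc]

theorem commute_mulRight (hd : IsDerivation d) {c : A} (hc : c ∈ hd.ker) :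
    Commute d (LinearMap.mulRight K c) :=
  LinearMap.ext fun a => by simp [hd a c, hd.mem_ker.1 hc]

theorem map_pow_of_map_eq_one (hd : IsDerivation d) {y : A} (hy : d y = 1) (n : ℕ) :
    d (y ^ n) = n • y ^ (n - 1) := by
  induction n with
  | zero => simp [hd.map_one]
  | succ n ih =>
    obtain rfl | hn := Nat.eq_zero_or_pos n
    · simp [hy]
    · rw [pow_succ, hd, ih, hy, mul_one, smul_mul_assoc, pow_sub_one_mul hn.ne',
        Nat.add_sub_cancel, succ_nsmul]

theorem pow_apply_pow_of_map_eq_one (hd : IsDerivation d) {y : A} (hy : d y = 1) (n m : ℕ) :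
    (d ^ n) (y ^ m) = m.descFactorial n • y ^ (m - n) := by
  induction n with
  | zero => simp
  | succ n ih =>
    rw [pow_succ', Module.End.mul_apply, ih, map_nsmul, hd.map_pow_of_map_eq_one hy, smul_smul,
      Nat.descFactorial_succ, mul_comm, Nat.sub_sub]

end IsDerivation

section Monomials

variable {A : Type*} [Ring A] {s : ℕ} {x : Fin s → A}

theorem mon_zero (x : Fin s → A) : mon x 0 = 1 := by
  simp [mon]

theorem mon_eq_noncommProd (hx : ∀ i j, Commute (x i) (x j)) (α : Fin s → ℕ) :
    mon x α = Finset.univ.noncommProd (fun i => x i ^ α i)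
      fun i _ j _ _ => (hx i j).pow_pow (α i) (α j) :=
  (Multiset.noncommProd_coe _ _).symm

theorem mon_add (hx : ∀ i j, Commute (x i) (x j)) (α β : Fin s → ℕ) :
    mon x (α + β) = mon x α * mon x β := by
  simp only [mon_eq_noncommProd hx, Pi.add_apply, pow_add]
  exact Finset.noncommProd_mul_distrib _ _ _ _ fun i _ j _ _ => (hx i j).pow_pow (β i) (α j)

theorem mon_single (x : Fin s → A) (i : Fin s) (n : ℕ) : mon x (Pi.single i n) = x i ^ n := by
  rw [mon, List.prod_map_eq_pow_single i _ fun j hj _ => by rw [Pi.single_eq_of_ne hj, pow_zero],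
    Pi.single_eq_same, List.count_eq_one_of_mem (List.nodup_finRange s) (List.mem_finRange i),
    pow_one]

theorem commute_mon_left {y : A} (hx : ∀ i, Commute (x i) y) (α : Fin s → ℕ) :
    Commute (mon x α) y := by
  refine Commute.list_prod_left _ _ fun z hz => ?_
  obtain ⟨i, -, rfl⟩ := List.mem_map.1 hz
  exact (hx i).pow_left (α i)

end Monomials

/-- The algebra of constants `⋂ i, ker (δ i)` of a family of derivations. -/
def constants {ι K A : Type*} [CommRing K] [Ring A] [Algebra K A] {δ : ι → (A →ₗ[K] A)}
    (hder : ∀ i, IsDerivation (δ i)) : Subalgebra K A :=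
  ⨅ i, (hder i).ker

section Constants

variable {ι K A : Type*} [CommRing K] [Ring A] [Algebra K A]

theorem mem_constants {δ : ι → (A →ₗ[K] A)} (hder : ∀ i, IsDerivation (δ i)) {a : A} :
    a ∈ constants hder ↔ ∀ i, δ i a = 0 := by
  simp only [constants, Algebra.mem_iInf, IsDerivation.mem_ker]

theorem mon_apply_mul_of_mem_constants {s : ℕ} {δ : Fin s → (A →ₗ[K] A)}
    (hder : ∀ i, IsDerivation (δ i)) {c : A} (hc : c ∈ constants hder) (β : Fin s → ℕ) (a : A) :
    mon δ β (c * a) = c * mon δ β a :=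
  have h : Commute (mon δ β) (LinearMap.mulLeft K c) :=
    commute_mon_left (fun i => (hder i).commute_mulLeft (Algebra.mem_iInf.1 hc i)) β
  LinearMap.congr_fun h.eq a

end Constants

section LocallyNilpotent

variable {K M : Type*} [Semiring K] [AddCommGroup M] [Module K M] {s : ℕ}

theorem exists_forall_mon_apply_eq_zero {δ : Fin s → Module.End K M}
    (hcomm : ∀ i j, Commute (δ i) (δ j)) {a : M} (hln : ∀ i, ∃ k : ℕ, (δ i ^ k) a = 0) :
    ∃ m, ∀ β : Fin s → ℕ, m ≤ ∑ i, β i → mon δ β a = 0 := by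
  choose k hk using hln
  refine ⟨∑ i, k i + 1, fun β hβ => ?_⟩
  obtain ⟨i, -, hi⟩ := Finset.exists_lt_of_sum_lt (Nat.lt_of_succ_le hβ)
  have single_le : Pi.single i (k i) ≤ β :=
    update_le_iff.2 ⟨hi.le, fun _ _ => Nat.zero_le _⟩
  rw [← tsub_add_cancel_of_le single_le, mon_add hcomm, mon_single, Module.End.mul_apply, hk,
    map_zero]

end LocallyNilpotent

section DualFamilies

variable {K A : Type*} [CommRing K] [Ring A] [Algebra K A]

/-- The factor `x h ^ α h` is a constant of the later derivations, and the later factors are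
constants of `δ h`, so the one-variable formula applies factor by factor. -/
theorem list_prod_pow_apply_list_prod_pow {ι : Type*} [DecidableEq ι] {δ : ι → (A →ₗ[K] A)}
    (hder : ∀ i, IsDerivation (δ i)) {x : ι → A}
    (hx : ∀ i j, δ i (x j) = if i = j then (1 : A) else 0) (α β : ι → ℕ) {l : List ι}
    (hl : l.Nodup) :
    (l.map fun i => (δ i ^ β i : Module.End K A)).prod (l.map fun i => x i ^ α i).prod =
      (l.map fun i => (α i).descFactorial (β i)).prod •
        (l.map fun i => x i ^ (α i - β i)).prod := by
  induction l with
  | nil => simp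
  | cons h t ih =>
    obtain ⟨hht, ht⟩ := List.nodup_cons.1 hl
    have pow_mem_ker {i j : ι} (hij : i ≠ j) (n : ℕ) : x j ^ n ∈ (hder i).ker :=
      pow_mem ((hder i).mem_ker.2 (by rw [hx, if_neg hij])) n
    set D : Module.End K A := (t.map fun i => (δ i ^ β i : Module.End K A)).prod
    set q : A := (t.map fun i => x i ^ (α i - β i)).prod
    have hD : Commute D (LinearMap.mulLeft K (x h ^ α h)) := by
      refine Commute.list_prod_left _ _ fun z hz => ?_
      obtain ⟨i, hi, rfl⟩ := List.mem_map.1 hz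
      exact ((hder i).commute_mulLeft (pow_mem_ker (ne_of_mem_of_not_mem hi hht) _)).pow_left _
    have hq : Commute (δ h ^ β h) (LinearMap.mulRight K q) := by
      refine ((hder h).commute_mulRight (list_prod_mem fun z hz => ?_)).pow_left _
      obtain ⟨i, hi, rfl⟩ := List.mem_map.1 hz
      exact pow_mem_ker (ne_of_mem_of_not_mem hi hht).symm _
    simp only [List.map_cons, List.prod_cons, Module.End.mul_apply]
    calc (δ h ^ β h) (D (x h ^ α h * (t.map fun i => x i ^ α i).prod))
      _ = (δ h ^ β h) (x h ^ α h * D (t.map fun i => x i ^ α i).prod) :=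
        congrArg _ (LinearMap.congr_fun hD.eq _)
      _ = (t.map fun i => (α i).descFactorial (β i)).prod • (δ h ^ β h) (x h ^ α h * q) := by
        rw [ih ht, mul_smul_comm, map_nsmul]
      _ = (t.map fun i => (α i).descFactorial (β i)).prod • ((δ h ^ β h) (x h ^ α h) * q) :=
        congrArg _ (LinearMap.congr_fun hq.eq _)
      _ = _ := by
        rw [(hder h).pow_apply_pow_of_map_eq_one (by rw [hx, if_pos rfl]), smul_mul_assoc,
          smul_smul, mul_comm]

variable {s : ℕ} {δ : Fin s → (A →ₗ[K] A)} (hder : ∀ i, IsDerivation (δ i)) {x : Fin s → A}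
  (hx : ∀ i j, δ i (x j) = if i = j then (1 : A) else 0)

include hder hx

theorem mon_apply_mon (α β : Fin s → ℕ) :
    mon δ β (mon x α) = (∏ i, (α i).descFactorial (β i)) • mon x (α - β) := by
  rw [Fin.prod_univ_def]
  exact list_prod_pow_apply_list_prod_pow hder hx α β (List.nodup_finRange s)

theorem mon_apply_mon_of_not_le {α β : Fin s → ℕ} (h : ¬ β ≤ α) : mon δ β (mon x α) = 0 := by
  obtain ⟨i, hi⟩ := not_forall.1 h
  rw [mon_apply_mon hder hx, Finset.prod_eq_zero (Finset.mem_univ i), zero_smul]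
  exact Nat.descFactorial_eq_zero_iff_lt.2 (not_le.1 hi)

theorem mon_apply_mon_self (α : Fin s → ℕ) :
    mon δ α (mon x α) = (∏ i, (α i).factorial) • (1 : A) := by
  simp only [mon_apply_mon hder hx, Nat.descFactorial_self, tsub_self, mon_zero]

theorem mon_apply_sum_mul_mon {S : Finset (Fin s → ℕ)} {c : (Fin s → ℕ) → A}
    (hc : ∀ β ∈ S, c β ∈ constants hder) {α : Fin s → ℕ} (hα : ∀ β ∈ S, α ≤ β → β = α) :
    mon δ α (∑ β ∈ S, c β * mon x β) = if α ∈ S then (∏ i, (α i).factorial) • c α else 0 := by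
  have mon_apply_term : ∀ β ∈ S, mon δ α (c β * mon x β) =
      if α = β then (∏ i, (α i).factorial) • c α else 0 := by
    intro β hβ
    rw [mon_apply_mul_of_mem_constants hder (hc β hβ)]
    split_ifs with h
    · rw [← h, mon_apply_mon_self hder hx, mul_smul_comm, mul_one]
    · rw [mon_apply_mon_of_not_le hder hx fun hle => h (hα β hβ hle).symm, mul_zero]
  rw [map_sum, Finset.sum_congr rfl mon_apply_term, Finset.sum_ite_eq]

theorem linearIndependent_constants_mon [IsAddTorsionFree A] :
    LinearIndependent (constants hder) (mon x) := by
  rw [linearIndependent_iff]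
  intro c hc
  by_contra hne
  obtain ⟨α, hα⟩ := Finset.exists_maximal (Finsupp.support_nonempty_iff.2 hne)
  have mon_apply_combination : mon δ α (Finsupp.linearCombination _ (mon x) c) =
      (∏ i, (α i).factorial) • (c α : A) :=
    (mon_apply_sum_mul_mon hder hx (fun β _ => (c β).2)
      fun β hβ hle => (hα.eq_of_le hβ hle).symm).trans (if_pos hα.prop)
  rw [hc, map_zero, eq_comm, nsmul_eq_zero_iff_right
    (Finset.prod_ne_zero_iff.2 fun i _ => (α i).factorial_ne_zero)] at mon_apply_combination
  exact Finsupp.mem_support_iff.1 hα.prop (Subtype.ext mon_apply_combination)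

theorem mem_span_mon_of_mon_apply_eq_zero [Module ℚ A] (hcomm : ∀ i j, Commute (δ i) (δ j))
    {m : ℕ} {a : A} (ha : ∀ β : Fin s → ℕ, m ≤ ∑ i, β i → mon δ β a = 0) :
    a ∈ Submodule.span (constants hder) (Set.range (mon x)) := by
  induction m generalizing a with
  | zero =>
    have a_eq_zero : a = 0 := by simpa [mon_zero] using ha 0 (Nat.zero_le _)
    exact a_eq_zero ▸ zero_mem _
  | succ m ih =>
    let S : Finset (Fin s → ℕ) := Finset.piAntidiag Finset.univ m
    have mem_S {β : Fin s → ℕ} : β ∈ S ↔ ∑ i, β i = m := by simp [S]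
    let c (β : Fin s → ℕ) : A := ((∏ i, (β i).factorial : ℕ) : ℚ)⁻¹ • mon δ β a
    have c_mem : ∀ β ∈ S, c β ∈ constants hder := by
      refine fun β hβ => (mem_constants hder).2 fun i => ?_
      rw [map_rat_smul, ← pow_one (δ i), ← mon_single, ← Module.End.mul_apply, ← mon_add hcomm,
        ha _ (by simp [Finset.sum_add_distrib, mem_S.1 hβ, add_comm]), smul_zero]
    have sum_mem : ∑ β ∈ S, c β * mon x β ∈
        Submodule.span (constants hder) (Set.range (mon x)) :=
      sum_mem fun β hβ => Submodule.smul_mem _ (⟨c β, c_mem β hβ⟩ : constants hder)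
        (Submodule.subset_span ⟨β, rfl⟩)
    rw [← sub_add_cancel a (∑ β ∈ S, c β * mon x β)]
    refine add_mem (ih fun γ hγ => ?_) sum_mem
    have eq_of_le : ∀ β ∈ S, γ ≤ β → β = γ := fun β hβ hle =>
      (hle.eq_of_not_lt fun hlt =>
        (Fintype.sum_strictMono hlt).not_ge ((mem_S.1 hβ).trans_le hγ)).symm
    rw [map_sub, mon_apply_sum_mul_mon hder hx c_mem eq_of_le]
    split_ifs with hγS
    · rw [← Nat.cast_smul_eq_nsmul ℚ, smul_inv_smul₀, sub_self]
      exact Nat.cast_ne_zero.2 (Finset.prod_ne_zero_iff.2 fun i _ => (γ i).factorial_ne_zero)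
    · rw [ha γ (hγ.lt_of_ne' (mt mem_S.2 hγS)), sub_zero]

theorem span_constants_mon_eq_top [Module ℚ A] (hcomm : ∀ i j, Commute (δ i) (δ j))
    (hln : ∀ i a, ∃ k : ℕ, (δ i ^ k) a = 0) :
    Submodule.span (constants hder) (Set.range (mon x)) = ⊤ := by
  refine eq_top_iff.2 fun a _ => ?_
  obtain ⟨m, hm⟩ := exists_forall_mon_apply_eq_zero hcomm fun i => hln i a
  exact mem_span_mon_of_mon_apply_eq_zero hder hx hcomm hm

/-- The ordered monomials `x^α` as a basis of `A` as a left module over the constants. -/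
noncomputable def monBasis [Module ℚ A] (hcomm : ∀ i j, Commute (δ i) (δ j))
    (hln : ∀ i a, ∃ k : ℕ, (δ i ^ k) a = 0) :
    Module.Basis (Fin s → ℕ) (constants hder) A :=
  have := IsAddTorsionFree.of_module_rat A
  .mk (linearIndependent_constants_mon hder hx) (span_constants_mon_eq_top hder hx hcomm hln).ge

theorem monBasis_apply [Module ℚ A] (hcomm : ∀ i j, Commute (δ i) (δ j))
    (hln : ∀ i a, ∃ k : ℕ, (δ i ^ k) a = 0) (α : Fin s → ℕ) :
    monBasis hder hx hcomm hln α = mon x α :=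
  Module.Basis.mk_apply _ (span_constants_mon_eq_top hder hx hcomm hln).ge α

end DualFamilies

theorem existsUnique_finsupp_mem_subalgebra_of_basis {ι K A : Type*} [CommRing K] [Ring A]
    [Algebra K A] {C : Subalgebra K A} (b : Module.Basis ι C A) (a : A) :
    ∃! c : ι →₀ A, (∀ i, c i ∈ C) ∧ a = c.sum fun i r => r * b i := by
  have sum_mapRange (l : ι →₀ C) :
      ((l.mapRange (↑) C.coe_zero).sum fun i r => r * b i) = Finsupp.linearCombination C b l :=
    Finsupp.sum_mapRange_index fun i => zero_mul (b i)
  refine ⟨(b.repr a).mapRange (↑) C.coe_zero, ⟨fun i => (b.repr a i).2, ?_⟩, ?_⟩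
  · rw [sum_mapRange, b.linearCombination_repr]
  · rintro c ⟨hc, rfl⟩
    obtain ⟨l, rfl⟩ : c ∈ Set.range (Finsupp.mapRange ((↑) : C → A) C.coe_zero) := by
      rw [Finsupp.range_mapRange]
      exact fun i => ⟨⟨c i, hc i⟩, rfl⟩
    rw [sum_mapRange, b.repr_linearCombination]

theorem free_module_over_constants_general
    {K A : Type*} [CommRing K] [Ring A] [Algebra K A] [Module ℚ A]
    {s : ℕ} (δ : Fin s → (A →ₗ[K] A))
    (hder : ∀ i, IsDerivation (δ i))
    (hcomm : ∀ i j, (δ i).comp (δ j) = (δ j).comp (δ i))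
    (hln : ∀ i (a : A), ∃ k : ℕ, (δ i ^ k) a = 0)
    (x : Fin s → A)
    (hx : ∀ i j, δ i (x j) = if i = j then (1 : A) else 0) :
    (∀ i j k, δ k (x i * x j - x j * x i) = 0) ∧
    (∀ a : A, ∃! c : (Fin s → ℕ) →₀ A,
      (∀ α i, δ i (c α) = 0) ∧ a = c.sum fun α v => v * mon x α) := by
  refine ⟨fun i j k => ?_, fun a => ?_⟩
  · refine (hder k).map_mul_sub_mul_eq_zero ?_ ?_ <;> rw [hx] <;> split_ifs <;> simp
  · have commute (i j : Fin s) : Commute (δ i) (δ j) := hcomm i j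
    simpa only [mem_constants, monBasis_apply] using
      existsUnique_finsupp_mem_subalgebra_of_basis (monBasis hder hx commute hln) a

/-- **Corollary.** Let `δ_1, …, δ_s` be commuting locally nilpotent
`K`-derivations of `A` (char `K = 0`) with `δ_i(x_j) = δ_{ij}` for some
`x_1, …, x_s ∈ A`, and let `C := ∩ ker δ_i`. Then all commutators
`[x_i, x_j]` lie in `C`, and `A = ⊕_{α ∈ ℕ^s} C·x^α`: every `a ∈ A` is a
unique finite sum `Σ_α c_α x^α` with all `c_α ∈ C` (so the ordered monomials
`x^α` are a basis of `A` as a free left `C`-module). -/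
theorem free_module_over_constants
    {K A : Type*} [Field K] [CharZero K] [Ring A] [Algebra K A]
    {s : ℕ} (δ : Fin s → (A →ₗ[K] A))
    (hder : ∀ i, IsDerivation (δ i))
    (hcomm : ∀ i j, (δ i).comp (δ j) = (δ j).comp (δ i))
    (hln : ∀ i (a : A), ∃ k : ℕ, (δ i ^ k) a = 0)
    (x : Fin s → A)
    (hx : ∀ i j, δ i (x j) = if i = j then (1 : A) else 0) :
    -- the commutators `[x_i, x_j]` lie in `C = ∩ ker δ_k`
    (∀ i j k, δ k (x i * x j - x j * x i) = 0) ∧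
    -- unique representation `a = Σ_α c_α x^α` with `c_α ∈ C`
    (∀ a : A, ∃! c : (Fin s → ℕ) →₀ A,
      (∀ α i, δ i (c α) = 0) ∧ a = c.sum fun α v => v * mon x α) := by
  let : Module ℚ A := Module.compHom A (algebraMap ℚ K)
  exact free_module_over_constants_general δ hder hcomm hln x hx
end
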